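/- arXiv:2412.03463 — 6 statements merged into one kernel-verified Lean document; each statement's English description precedes it below -/
import Mathlib

section
/- If G is a connected, claw-free finite simple graph, then the positive semidefinite zero forcing number of G equals the standard zero forcing number of G, i.e., Z_+(G) = Z(G). -/
open SimpleGraph

/-- The standard color change rule: a blue vertex `u ∈ S` with exactly one white
neighbor `v` can force `v` to become blue. -/
def StdStep {V : Type*} (G : SimpleGraph V) (S : Set V) (u v : V) : Prop :=
  u ∈ S ∧ v ∉ S ∧ G.Adj u v ∧ ∀ w : V, G.Adj u w → w ∉ S → w = v

/-- The positive semidefinite color change rule: a blue vertex `u ∈ S` can force a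
white vertex `v` if `v` is the unique neighbor of `u` in the connected component
containing `v` of the subgraph induced on the white vertices `Sᶜ`. -/
def PSDStep {V : Type*} (G : SimpleGraph V) (S : Set V) (u v : V) : Prop :=
  u ∈ S ∧ G.Adj u v ∧ ∃ hv : v ∈ (Sᶜ : Set V),
    ∀ w : V, ∀ hw : w ∈ (Sᶜ : Set V), G.Adj u w →
      (G.induce (Sᶜ : Set V)).Reachable ⟨v, hv⟩ ⟨w, hw⟩ → w = v

/-- `Derives step B S` means the blue set `S` is obtainable from the initial blue
set `B` by iterated application of the color change rule `step`. -/
inductive Derives {V : Type*} (step : Set V → V → V → Prop) : Set V → Set V → Prop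
  | refl (S : Set V) : Derives step S S
  | tail {S T : Set V} {u v : V} : Derives step S T → step T u v → Derives step S (insert v T)

/-- `B` is a standard zero forcing set of `G` if iterating the standard color
change rule from `B` colors all vertices blue. -/
def IsStdForcingSet {V : Type*} (G : SimpleGraph V) (B : Set V) : Prop :=
  Derives (StdStep G) B Set.univ

/-- `B` is a positive semidefinite zero forcing set of `G` if iterating the
positive semidefinite color change rule from `B` colors all vertices blue. -/
def IsPSDForcingSet {V : Type*} (G : SimpleGraph V) (B : Set V) : Prop :=
  Derives (PSDStep G) B Set.univ

/-- The standard zero forcing number `Z(G)`. -/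
noncomputable def Z {V : Type*} (G : SimpleGraph V) : ℕ :=
  sInf {n : ℕ | ∃ B : Set V, IsStdForcingSet G B ∧ B.ncard = n}

/-- The positive semidefinite zero forcing number `Z₊(G)`. -/
noncomputable def Zplus {V : Type*} (G : SimpleGraph V) : ℕ :=
  sInf {n : ℕ | ∃ B : Set V, IsPSDForcingSet G B ∧ B.ncard = n}

/-- A graph is claw-free if no induced subgraph is isomorphic to `K_{1,3}`. -/
def ClawFree {V : Type*} (G : SimpleGraph V) : Prop :=
  ¬ ∃ s : Set V, Nonempty (G.induce s ≃g completeBipartiteGraph (Fin 1) (Fin 3))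

/-- `S` is a minimum positive semidefinite zero forcing set of `G`. -/
def IsMinPSDForcingSet {V : Type*} (G : SimpleGraph V) (S : Set V) : Prop :=
  IsPSDForcingSet G S ∧ ∀ B : Set V, IsPSDForcingSet G B → S.ncard ≤ B.ncard

section Aux

variable {V : Type*} {G : SimpleGraph V}

/-- Adjacency inside `W`. -/
def InAdj (G : SimpleGraph V) (W : Set V) (x y : V) : Prop := G.Adj x y ∧ x ∈ W ∧ y ∈ W

/-- `W` induces a preconnected subgraph. -/
def ConnSet (G : SimpleGraph V) (W : Set V) : Prop :=
  ∀ a ∈ W, ∀ b ∈ W, Relation.ReflTransGen (InAdj G W) a b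

/-- `W` is a union of components of the white graph. -/
def ClosedIn (G : SimpleGraph V) (B W : Set V) : Prop :=
  ∀ x ∈ W, ∀ y, G.Adj x y → y ∉ W → y ∈ B

theorem clawFree_adj (hclaw : ClawFree G) {v y e d : V} (hy : G.Adj v y) (he : G.Adj v e)
    (hd : G.Adj v d) (hye : ¬ G.Adj y e) (hyd : ¬ G.Adj y d) (h1 : y ≠ e) (h2 : y ≠ d)
    (h3 : e ≠ d) : G.Adj e d := by
  by_contra hed
  apply hclaw
  have f : completeBipartiteGraph (Fin 1) (Fin 3) ↪g G :=
    { toFun := Sum.elim (fun _ => v) ![y, e, d]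
      inj' := by
        have := hy.ne
        have := he.ne
        have := hd.ne
        rintro (a | a) (b | b) hab <;> fin_cases a <;> fin_cases b <;> simp_all
      map_rel_iff' := by
        have := hy.symm
        have := he.symm
        have := hd.symm
        have : ¬ G.Adj e y := fun h => hye h.symm
        have : ¬ G.Adj d y := fun h => hyd h.symm
        have : ¬ G.Adj d e := fun h => hed h.symm
        rintro (a | a) (b | b) <;> fin_cases a <;> fin_cases b <;>
          simp [*] <;> first | exact hy | exact he | exact hd | assumption }
  exact ⟨Set.range f, ⟨f.isoInduceRange.symm⟩⟩

theorem ConnSet.remove (hclaw : ClawFree G) {W : Set V} (hW : ConnSet G W) {y v : V}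
    (hyW : y ∉ W) (hyv : G.Adj y v) (hu : ∀ w ∈ W, G.Adj y w → w = v) :
    ConnSet G (W \ {v}) := by
  intro a ha b hb
  have key : ∀ c, Relation.ReflTransGen (InAdj G W) a c →
      (c ≠ v → Relation.ReflTransGen (InAdj G (W \ {v})) a c) ∧
      (c = v → ∃ d ∈ W, d ≠ v ∧ G.Adj d v ∧
        Relation.ReflTransGen (InAdj G (W \ {v})) a d) := by
    intro c hc
    induction hc with
    | refl => exact ⟨fun _ => .refl, fun h => absurd h ha.2⟩
    | @tail c d _ hcd ih =>
      obtain ⟨hadj, hcW, hdW⟩ := hcd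
      by_cases hc : c = v
      · obtain ⟨e, heW, hev, head, hae⟩ := ih.2 hc
        subst hc
        refine ⟨fun hd => ?_, fun hd => absurd hd hadj.ne'⟩
        by_cases hed : e = d
        · exact hed ▸ hae
        · refine hae.tail ⟨?_, ⟨heW, hev⟩, ⟨hdW, hd⟩⟩
          refine clawFree_adj hclaw hyv.symm head.symm hadj (fun h => hev (hu _ heW h))
            (fun h => hd (hu _ hdW h)) ?_ ?_ hed
          · rintro rfl; exact hyW heW
          · rintro rfl; exact hyW hdW
      · refine ⟨fun hd => (ih.1 hc).tail ⟨hadj, ⟨hcW, hc⟩, ⟨hdW, hd⟩⟩, ?_⟩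
        rintro rfl
        exact ⟨c, hcW, hc, hadj, ih.1 hc⟩
  exact (key b (hW a ha.1 b hb.1)).1 hb.2

theorem InAdj.mono {W W' : Set V} (h : W ⊆ W') {a b : V}
    (hr : Relation.ReflTransGen (InAdj G W) a b) : Relation.ReflTransGen (InAdj G W') a b :=
  Relation.ReflTransGen.mono (fun _ _ h' => ⟨h'.1, h h'.2.1, h h'.2.2⟩) _ _ hr

theorem ConnSet.insert {W : Set V} (hW : ConnSet G W) {x u : V} (hx : x ∈ W)
    (hux : G.Adj u x) : ConnSet G (insert u W) := by
  have hs : W ⊆ Insert.insert u W := Set.subset_insert _ _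
  have h1 : InAdj G (Insert.insert u W) u x := ⟨hux, Set.mem_insert _ _, hs hx⟩
  have h2 : InAdj G (Insert.insert u W) x u := ⟨hux.symm, hs hx, Set.mem_insert _ _⟩
  rintro a (rfl | ha) b (rfl | hb)
  · exact .refl
  · exact .head h1 (InAdj.mono hs (hW _ hx _ hb))
  · exact .tail (InAdj.mono hs (hW _ ha _ hx)) h2
  · exact InAdj.mono hs (hW _ ha _ hb)

theorem ConnSet.reachable {W T : Set V} (hW : ConnSet G W) (hT : W ⊆ Tᶜ) {a b : V}
    (ha : a ∈ W) (hb : b ∈ W) :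
    (G.induce (Tᶜ : Set V)).Reachable ⟨a, hT ha⟩ ⟨b, hT hb⟩ := by
  have key : ∀ c, Relation.ReflTransGen (InAdj G W) a c → ∀ hc : c ∈ W,
      (G.induce (Tᶜ : Set V)).Reachable ⟨a, hT ha⟩ ⟨c, hT hc⟩ := by
    intro c hc
    induction hc with
    | refl => exact fun _ => Reachable.refl _
    | @tail c d _ hcd ih =>
      intro hd
      refine (ih hcd.2.1).trans (Adj.reachable ?_)
      exact hcd.1
  exact key b (hW a ha b hb) hb

theorem reachable_closed {S K : Set V} (hK : ∀ x ∈ K, ∀ y, y ∉ S → G.Adj x y → y ∈ K)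
    {a b : (Sᶜ : Set V)} (h : (G.induce (Sᶜ : Set V)).Reachable a b) (ha : (a : V) ∈ K) :
    (b : V) ∈ K := by
  rw [reachable_iff_reflTransGen] at h
  induction h with
  | refl => exact ha
  | @tail c d _ hcd ih => exact hK _ ih _ d.2 hcd

theorem Derives.head {step : Set V → V → V → Prop} {S T : Set V} {u v : V}
    (h : step S u v) (hd : Derives step (insert v S) T) : Derives step S T := by
  generalize hR : insert v S = R at hd
  induction hd with
  | refl => subst hR; exact .tail (.refl _) h
  | tail _ h' ih => exact .tail ih h'

theorem PSDStep.mono {T T' : Set V} {u v : V} (h : PSDStep G T u v) (hT : T ⊆ T')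
    (hv : v ∉ T') : PSDStep G T' u v := by
  obtain ⟨h1, h2, h3, h4⟩ := h
  refine ⟨hT h1, h2, hv, fun w hw huw hr => h4 w (fun h => hw (hT h)) huw ?_⟩
  have hs : (T'ᶜ : Set V) ⊆ Tᶜ := Set.compl_subset_compl.2 hT
  exact hr.map (SimpleGraph.induceHomOfLE G hs).toHom

theorem IsPSDForcingSet.mono {B S : Set V} (h : IsPSDForcingSet G B) (hS : B ⊆ S) :
    IsPSDForcingSet G S := by
  have key : ∀ T, Derives (PSDStep G) B T → ∃ T', T ⊆ T' ∧ Derives (PSDStep G) S T' := by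
    intro T hT
    induction hT with
    | refl => exact ⟨S, hS, .refl _⟩
    | @tail T u v _ hst ih =>
      obtain ⟨T', h1, h2⟩ := ih
      by_cases hv : v ∈ T'
      · exact ⟨T', Set.insert_subset hv h1, h2⟩
      · exact ⟨_, Set.insert_subset_insert h1, h2.tail (hst.mono h1 hv)⟩
  obtain ⟨T', h1, h2⟩ := key _ h
  rw [Set.univ_subset_iff.1 h1] at h2
  exact h2

theorem exists_force {B W : Set V} (h : IsPSDForcingSet G B) (hWB : W ⊆ Bᶜ)
    (hcl : ClosedIn G B W) (hW : ConnSet G W) (hne : W.Nonempty) :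
    ∃ y ∈ B, ∃ v ∈ W, G.Adj y v ∧ ∀ w ∈ W, G.Adj y w → w = v := by
  by_contra hcon
  have key : ∀ T, Derives (PSDStep G) B T → (W ⊆ Bᶜ) → (ClosedIn G B W) →
      (¬ ∃ y ∈ B, ∃ v ∈ W, G.Adj y v ∧ ∀ w ∈ W, G.Adj y w → w = v) → W ⊆ Tᶜ := by
    intro T hT
    induction hT with
    | refl => exact fun h _ _ => h
    | @tail T u v _ hst ih =>
      intro hWB hcl hcon
      have hWT := ih hWB hcl hcon
      obtain ⟨h1, h2, h3, h4⟩ := hst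
      rintro w hw (rfl | hwT)
      · apply hcon
        refine ⟨u, hcl w hw u h2.symm (fun h => hWT h h1), w, hw, h2, fun z hz huz => ?_⟩
        exact h4 z (hWT hz) huz (hW.reachable hWT hw hz)
      · exact hWT hw hwT
  obtain ⟨x, hx⟩ := hne
  exact key _ h hWB hcl hcon hx (Set.mem_univ _)

theorem migrate {B W : Set V} (h : IsPSDForcingSet G B) (hWB : W ⊆ Bᶜ)
    (hcl : ClosedIn G B W) {u v : V} (hu : u ∈ B) (hv : v ∈ W) (huv : G.Adj u v)
    (huniq : ∀ w ∈ W, G.Adj u w → w = v) :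
    IsPSDForcingSet G (insert v (B \ {u})) := by
  have hne : u ≠ v := huv.ne
  have hB : B ⊆ insert u (insert v (B \ {u})) := by
    intro x hx
    by_cases hxu : x = u
    · exact Or.inl hxu
    · exact Or.inr (Or.inr ⟨hx, hxu⟩)
  refine Derives.head (u := v) (v := u) ?_ (h.mono hB)
  refine ⟨Set.mem_insert _ _, huv.symm, ?_, ?_⟩
  · rintro (h | h)
    · exact hne h
    · exact h.2 rfl
  · intro w hw hvw hr
    have hwK : w ∈ {x | x ∉ W ∧ x ∉ insert v (B \ {u})} := by
      refine reachable_closed (K := {x | x ∉ W ∧ x ∉ insert v (B \ {u})}) ?_ hr ?_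
      · rintro x ⟨hxW, hxB⟩ y hy hxy
        refine ⟨fun hyW => ?_, hy⟩
        have hxB' : x ∈ B := hcl y hyW x hxy.symm hxW
        have hxu : x = u := by
          by_contra hxu
          exact hxB (Or.inr ⟨hxB', hxu⟩)
        subst hxu
        exact hy (Or.inl (huniq y hyW hxy))
      · refine ⟨fun h => hWB h hu, ?_⟩
        rintro (h | h)
        · exact hne h
        · exact h.2 rfl
    by_contra hwu
    exact hw (Or.inr ⟨hcl v hv w hvw hwK.1, hwu⟩)

theorem std_of_conn [Finite V] (hclaw : ClawFree G) : ∀ (n : ℕ) (B : Set V), Bᶜ.ncard = n →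
    ConnSet G Bᶜ → IsPSDForcingSet G B → IsStdForcingSet G B := by
  intro n
  induction n with
  | zero =>
    intro B hn _ _
    have : B = Set.univ := by
      rw [Set.ncard_eq_zero] at hn
      exact Set.compl_empty_iff.1 hn
    subst this
    exact .refl _
  | succ n ih =>
    intro B hn hc hB
    have hne : (Bᶜ : Set V).Nonempty := by
      rw [← Set.ncard_pos]; omega
    obtain ⟨y, hy, v, hv, hyv, huniq⟩ := exists_force hB subset_rfl
      (fun x _ y _ h => by simpa using h) hc hne
    have hcompl : (insert v B)ᶜ = Bᶜ \ {v} := by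
      ext x; simp [not_or, and_comm]
    refine Derives.head (u := y) (v := v) ⟨hy, hv, hyv, fun w h1 h2 => huniq w h2 h1⟩ ?_
    refine ih _ ?_ ?_ (hB.mono (Set.subset_insert _ _))
    · rw [hcompl, Set.ncard_sdiff_singleton_of_mem hv]; omega
    · rw [hcompl]
      exact hc.remove hclaw (fun h => h hy) hyv huniq

theorem grow [Finite V] (hclaw : ClawFree G) {W₁ : Set V} (hW₁ : ConnSet G W₁) {m : ℕ}
    (hmax : ∀ B C : Set V, IsPSDForcingSet G B → B.ncard = m → C ⊆ Bᶜ → ConnSet G C →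
      C.ncard ≤ W₁.ncard) :
    ∀ (n : ℕ) (B W : Set V), W.ncard = n → IsPSDForcingSet G B → B.ncard = m → W₁ ⊆ Bᶜ →
      W ⊆ Bᶜ → ConnSet G W → ClosedIn G B W → Disjoint W₁ W →
      ∀ u ∈ B, (∃ x ∈ W₁, G.Adj u x) → (∃ x ∈ W, G.Adj u x) → False := by
  intro n
  induction n with
  | zero =>
    rintro B W hn _ _ _ _ _ _ _ u _ _ ⟨x, hx, _⟩
    rw [Set.ncard_eq_zero] at hn
    simp [hn] at hx
  | succ n ih =>
    rintro B W hn hB hBm hWB₁ hWB hW hcl hdis u hu huW₁ ⟨x, hx, hux⟩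
    have hbad : ∀ y ∈ B, (∃ x ∈ W₁, G.Adj y x) → ∀ v ∈ W, G.Adj y v →
        (∀ w ∈ W, G.Adj y w → w = v) → False := by
      rintro y hy ⟨z, hz, hyz⟩ v hv hyv huniq
      have h1 := migrate hB hWB hcl hy hv hyv huniq
      have h2 := hmax _ (insert y W₁) h1 (by rw [Set.ncard_exchange (hWB hv) hy, hBm]) ?_
        (hW₁.insert hz hyz)
      · rw [Set.ncard_insert_of_notMem (fun h => hWB₁ h hy)] at h2
        omega
      · rintro w (rfl | hw) (rfl | hw')
        · exact hyv.ne rfl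
        · exact hw'.2 rfl
        · exact Set.disjoint_left.1 hdis hw hv
        · exact hWB₁ hw hw'.1
    obtain ⟨y, hy, v, hv, hyv, huniq⟩ := exists_force hB hWB hcl hW ⟨x, hx⟩
    by_cases hyW₁ : ∃ x ∈ W₁, G.Adj y x
    · exact hbad y hy hyW₁ v hv hyv huniq
    have hyu : u ≠ y := by rintro rfl; exact hyW₁ huW₁
    by_cases huv : ∃ x ∈ W, x ≠ v ∧ G.Adj u x
    · obtain ⟨x', hx', hx'v, hux'⟩ := huv
      refine ih (insert v (B \ {y})) (W \ {v}) ?_ (migrate hB hWB hcl hy hv hyv huniq)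
        (by rw [Set.ncard_exchange (hWB hv) hy, hBm]) ?_ ?_
        (hW.remove hclaw (fun h => hWB h hy) hyv huniq) ?_
        (hdis.mono_right Set.sdiff_subset) u (Or.inr ⟨hu, hyu⟩) huW₁ ⟨x', ⟨hx', hx'v⟩, hux'⟩
      · rw [Set.ncard_sdiff_singleton_of_mem hv]; omega
      · rintro w hw (rfl | hw')
        · exact Set.disjoint_left.1 hdis hw hv
        · exact hWB₁ hw hw'.1
      · rintro w hw (rfl | hw')
        · exact hw.2 rfl
        · exact hWB hw.1 hw'.1
      · rintro a ⟨ha, hav⟩ b hab hb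
        by_cases hbv : b = v
        · exact Or.inl hbv
        · refine Or.inr ⟨hcl a ha b hab (fun h => hb ⟨h, hbv⟩), ?_⟩
          rintro rfl
          exact hav (huniq a ha hab.symm)
    · have hall : ∀ w ∈ W, G.Adj u w → w = v := by
        intro w hw huw
        by_contra hwv
        exact huv ⟨w, hw, hwv, huw⟩
      have := hall x hx hux
      subst this
      exact hbad u hu huW₁ x hx hux hall

theorem component_exists {B : Set V} {x : V} (hx : x ∉ B) :
    ∃ W : Set V, x ∈ W ∧ W ⊆ Bᶜ ∧ ConnSet G W ∧ ClosedIn G B W ∧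
      ∀ y ∈ W, Relation.ReflTransGen (InAdj G Bᶜ) x y := by
  let W : Set V := {y | Relation.ReflTransGen (InAdj G Bᶜ) x y}
  have hfrom : ∀ y, Relation.ReflTransGen (InAdj G Bᶜ) x y →
      Relation.ReflTransGen (InAdj G W) x y ∧ Relation.ReflTransGen (InAdj G W) y x := by
    intro y hy
    induction hy with
    | refl => exact ⟨.refl, .refl⟩
    | @tail c d hc hcd ih =>
      have hd : d ∈ W := Relation.ReflTransGen.tail hc hcd
      exact ⟨ih.1.tail ⟨hcd.1, hc, hd⟩, .head ⟨hcd.1.symm, hd, hc⟩ ih.2⟩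
  have hsub : W ⊆ Bᶜ := by
    intro y hy
    rcases Relation.ReflTransGen.cases_tail hy with h | ⟨c, _, h⟩
    · rw [h]; exact hx
    · exact h.2.2
  refine ⟨W, .refl, hsub, fun a ha b hb => (hfrom a ha).2.trans (hfrom b hb).1, ?_,
    fun y hy => hy⟩
  intro a ha b hab hb
  by_contra hbB
  exact hb (Relation.ReflTransGen.tail ha ⟨hab, hsub ha, hbB⟩)

theorem exists_std [Finite V] (hconn : G.Connected) (hclaw : ClawFree G) {B₀ : Set V}
    (hB₀ : IsPSDForcingSet G B₀)
    (hmin : ∀ B : Set V, IsPSDForcingSet G B → B₀.ncard ≤ B.ncard) :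
    ∃ B : Set V, IsStdForcingSet G B ∧ B.ncard = B₀.ncard := by
  obtain ⟨⟨B, W⟩, ⟨hB, hBm, hWB, hW⟩, hmax'⟩ := Set.exists_max_image
    {p : Set V × Set V | IsPSDForcingSet G p.1 ∧ p.1.ncard = B₀.ncard ∧ p.2 ⊆ p.1ᶜ ∧
      ConnSet G p.2} (fun p => p.2.ncard) (Set.toFinite _)
      ⟨(B₀, ∅), hB₀, rfl, Set.empty_subset _, fun a ha => ha.elim⟩
  dsimp only at hB hBm hWB hW hmax'
  have hmax : ∀ B C : Set V, IsPSDForcingSet G B → B.ncard = B₀.ncard → C ⊆ Bᶜ →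
      ConnSet G C → C.ncard ≤ W.ncard :=
    fun B C h1 h2 h3 h4 => hmax' (B, C) ⟨h1, h2, h3, h4⟩
  suffices hBW : Bᶜ = W from ⟨B, std_of_conn hclaw _ B rfl (hBW ▸ hW) hB, hBm⟩
  have hcl : ClosedIn G B W := by
    intro x hx y hxy hy
    by_contra hyB
    have h2 := hmax B (insert y W) hB hBm (Set.insert_subset hyB hWB) (hW.insert hx hxy.symm)
    rw [Set.ncard_insert_of_notMem hy] at h2
    omega
  -- no blue vertex touches `W` and another white vertex
  have hno : ∀ u ∈ B, (∃ x ∈ W, G.Adj u x) → ∀ z, G.Adj u z → z ∉ W → z ∈ B := by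
    intro u hu huW z huz hzW
    by_contra hzB
    obtain ⟨W₂, h1, h2, h3, h4, h5⟩ := component_exists (G := G) hzB
    refine grow hclaw hW hmax _ B W₂ rfl hB hBm hWB h2 h3 h4 ?_ u hu huW ⟨z, h1, huz⟩
    rw [Set.disjoint_right]
    intro a ha
    have := h5 a ha
    clear ha
    induction this with
    | refl => exact hzW
    | @tail c d _ hcd ih => exact fun hd => hcd.2.1 (hcl d hd c hcd.1.symm ih)
  refine (Set.Subset.antisymm hWB ?_).symm
  intro q hqB
  by_contra hqW
  -- `W` is nonempty
  have hWne : W.Nonempty := by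
    by_contra hne
    rw [Set.not_nonempty_iff_eq_empty] at hne
    have h2 := hmax B {q} hB hBm (by simpa using hqB)
      (by rintro a rfl b rfl; exact .refl)
    simp [hne] at h2
  obtain ⟨p, hp⟩ := hWne
  let S : Set V := {x | x ∈ W ∨ ∃ w ∈ W, G.Adj x w}
  have hallS : ∀ x, x ∈ S := by
    intro x
    have hr := hconn.preconnected p x
    rw [reachable_iff_reflTransGen] at hr
    induction hr with
    | refl => exact Or.inl hp
    | @tail b₁ b₂ _ hadj ih =>
      by_contra hb₂
      have hb₂W : b₂ ∉ W := fun h => hb₂ (Or.inl h)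
      have hb₂N : ∀ w ∈ W, ¬ G.Adj b₂ w := fun w hw h => hb₂ (Or.inr ⟨w, hw, h⟩)
      rcases ih with hW1 | ⟨w, hw, hb₁w⟩
      · exact hb₂N _ hW1 hadj.symm
      have hb₁W : b₁ ∉ W := fun h => hb₂N _ h hadj.symm
      have hb₁B : b₁ ∈ B := hcl w hw b₁ hb₁w.symm hb₁W
      have hb₂B : b₂ ∈ B := hno b₁ hb₁B ⟨w, hw, hb₁w⟩ b₂ hadj hb₂W
      have hforce : IsPSDForcingSet G (B \ {b₂}) := by
        refine Derives.head (u := b₁) (v := b₂) ?_ (hB.mono ?_)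
        · refine ⟨⟨hb₁B, hadj.ne⟩, hadj, fun h => h.2 rfl, ?_⟩
          intro z hz hb₁z hr
          have hzW : z ∈ Wᶜ := by
            have : z ∈ {x | x ∉ W ∧ x ∉ B \ {b₂}} := by
              refine reachable_closed (K := {x | x ∉ W ∧ x ∉ B \ {b₂}}) ?_ hr
                ⟨hb₂W, fun h => h.2 rfl⟩
              rintro x ⟨hxW, hxB⟩ y hy hxy
              refine ⟨fun hyW => hxB ⟨hcl y hyW x hxy.symm hxW, ?_⟩, hy⟩
              rintro rfl
              exact hb₂N y hyW hxy
            exact this.1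
          by_contra hzb
          exact hz ⟨hno b₁ hb₁B ⟨w, hw, hb₁w⟩ z hb₁z hzW, hzb⟩
        · intro x hx
          by_cases hxb : x = b₂
          · exact Or.inl hxb
          · exact Or.inr ⟨hx, hxb⟩
      have h1 := hmin _ hforce
      have h2 := Set.ncard_sdiff_singleton_lt_of_mem hb₂B
      omega
  rcases hallS q with h | ⟨w, hw, hqw⟩
  · exact hqW h
  · exact hqB (hcl w hw q hqw.symm hqW)

theorem IsStdForcingSet.psd {B : Set V} (h : IsStdForcingSet G B) : IsPSDForcingSet G B := by
  have key : ∀ T, Derives (StdStep G) B T → Derives (PSDStep G) B T := by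
    intro T hT
    induction hT with
    | refl => exact .refl _
    | tail _ hst ih =>
      obtain ⟨h1, h2, h3, h4⟩ := hst
      exact ih.tail ⟨h1, h3, h2, fun w hw huw _ => h4 w huw hw⟩
  exact key _ h

end Aux

/-- If `G` is a connected, claw-free finite simple graph, then `Z₊(G) = Z(G)`. -/
theorem connected_clawFree_Zplus_eq_Z {V : Type*} [Fintype V] (G : SimpleGraph V)
    (hconn : G.Connected) (hclaw : ClawFree G) : Zplus G = Z G := by
  apply le_antisymm
  · have hne : {n : ℕ | ∃ B : Set V, IsStdForcingSet G B ∧ B.ncard = n}.Nonempty :=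
      ⟨_, Set.univ, Derives.refl _, rfl⟩
    obtain ⟨B, hB, hn⟩ := Nat.sInf_mem hne
    exact Nat.sInf_le ⟨B, hB.psd, hn⟩
  · have hne : {n : ℕ | ∃ B : Set V, IsPSDForcingSet G B ∧ B.ncard = n}.Nonempty :=
      ⟨_, Set.univ, Derives.refl _, rfl⟩
    obtain ⟨B, hB, hn⟩ := Nat.sInf_mem hne
    obtain ⟨B', hB', hn'⟩ := exists_std hconn hclaw hB
      (fun C hC => hn.trans_le (Nat.sInf_le ⟨C, hC, rfl⟩))
    exact Nat.sInf_le ⟨B', hB', hn'.trans hn⟩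
end

section
/- If G is any (not necessarily connected) claw-free finite simple graph, then Z_+(G) = Z(G). -/
open SimpleGraph

namespace ClawAux

/-- `X` is a union of connected components of the graph induced on `W`. -/
def Cl {V : Type*} (G : SimpleGraph V) (W X : Set V) : Prop :=
  X ⊆ W ∧ ∀ x ∈ X, ∀ y ∈ W, G.Adj x y → y ∈ X

/-- `X` is connected or empty (cut formulation). -/
def Conn {V : Type*} (G : SimpleGraph V) (X : Set V) : Prop :=
  ∀ Y, Cl G X Y → Y.Nonempty → Y = X

/-- `K` is a connected component of the graph induced on `W`. -/
def Comp {V : Type*} (G : SimpleGraph V) (W K : Set V) : Prop :=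
  K.Nonempty ∧ Cl G W K ∧ Conn G K

/-- `v` is the unique neighbour of `u` in `X`. -/
def Uniq {V : Type*} (G : SimpleGraph V) (X : Set V) (u v : V) : Prop :=
  v ∈ X ∧ G.Adj u v ∧ ∀ w ∈ X, G.Adj u w → w = v

/-- positive semidefinite forcing where vertices of `F` may not force. -/
def PF {V : Type*} (G : SimpleGraph V) (F B : Set V) : Prop :=
  ∀ S, B ⊆ S → S ≠ Set.univ → ∃ u v X, u ∈ S ∧ u ∉ F ∧ Cl G Sᶜ X ∧ Uniq G X u v

/-- standard forcing where vertices of `F` may not force. -/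
def SF {V : Type*} (G : SimpleGraph V) (F B : Set V) : Prop :=
  ∀ S, B ⊆ S → S ≠ Set.univ → ∃ u v, u ∈ S ∧ u ∉ F ∧ Uniq G Sᶜ u v

/-- no claw, elementary form -/
def NoClaw {V : Type*} (G : SimpleGraph V) : Prop :=
  ∀ c x y z, G.Adj c x → G.Adj c y → G.Adj c z → x ≠ y → x ≠ z → y ≠ z →
    ¬ G.Adj x y → ¬ G.Adj x z → ¬ G.Adj y z → False

variable {V : Type*} {G : SimpleGraph V}

theorem noClaw_of_clawFree (h : ClawFree G) : NoClaw G := by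
  intro c x y z hx hy hz hxy hxz hyz nxy nxz nyz
  apply h
  let f : Fin 1 ⊕ Fin 3 → V := Sum.elim (fun _ => c) ![x, y, z]
  have hf : Function.Injective f := by
    rintro (i | i) (j | j) hij
    · congr 1; exact Subsingleton.elim _ _
    · exfalso; fin_cases j <;> simp [f] at hij
      · exact hx.ne hij
      · exact hy.ne hij
      · exact hz.ne hij
    · exfalso; fin_cases i <;> simp [f] at hij
      · exact hx.ne hij.symm
      · exact hy.ne hij.symm
      · exact hz.ne hij.symm
    · fin_cases i <;> fin_cases j <;> simp_all [f, eq_comm]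
  have ha : ∀ a b, G.Adj (f a) (f b) ↔ (completeBipartiteGraph (Fin 1) (Fin 3)).Adj a b := by
    rintro (i | i) (j | j)
    · simp [f]
    · fin_cases j <;> simp [f, hx, hy, hz]
    · fin_cases i <;> simp [f, hx.symm, hy.symm, hz.symm]
    · fin_cases i <;> fin_cases j <;>
        simp [f, nxy, nxz, nyz, G.adj_comm y x, G.adj_comm z x, G.adj_comm z y]
  refine ⟨Set.range f, ⟨RelIso.symm ⟨Equiv.ofInjective f hf, ?_⟩⟩⟩
  intro a b
  exact ha a b

theorem PF.mono {F B B' : Set V} (h : PF G F B) (hb : B ⊆ B') : PF G F B' :=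
  fun S hS => h S (hb.trans hS)

/-- the first force into a component -/
theorem first_force {F B C : Set V} (h : PF G F B) (hC : Comp G Bᶜ C) :
    ∃ t v, t ∈ B ∧ t ∉ F ∧ Uniq G C t v := by
  obtain ⟨hne, ⟨hsub, hcl⟩, hconn⟩ := hC
  obtain ⟨u, v, X, hu, huF, hX, hU⟩ := h Cᶜ (fun b hb hc => hsub hc hb)
    (by intro h; obtain ⟨c, hc⟩ := hne; have : c ∈ Cᶜ := by rw [h]; trivial
        exact this hc)
  rw [compl_compl] at hX
  have := hconn X hX ⟨v, hU.1⟩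
  subst this
  refine ⟨u, v, ?_, huF, hU⟩
  by_contra hb
  exact hu (hcl v hU.1 u hb hU.2.1.symm)

theorem conn_remove (hcf : NoClaw G) {C : Set V} (hconn : Conn G C) {t v : V} (ht : t ∉ C)
    (hU : Uniq G C t v) : Conn G (C \ {v}) := by
  obtain ⟨hv, htv, huniq⟩ := hU
  rintro Y ⟨hY, hYc⟩ ⟨y0, hy0⟩
  by_cases h1 : ∃ a ∈ Y, G.Adj v a
  · obtain ⟨a, haY, hva⟩ := h1
    by_cases h2 : ∃ b ∈ C \ {v}, b ∉ Y ∧ G.Adj v b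
    · obtain ⟨b, hb, hbY, hvb⟩ := h2
      exfalso
      refine hcf v t a b htv.symm hva hvb ?_ ?_ ?_ ?_ ?_ ?_
      · rintro rfl; exact ht (hY haY).1
      · rintro rfl; exact ht hb.1
      · rintro rfl; exact hbY haY
      · intro h; exact (hY haY).2 (huniq a (hY haY).1 h)
      · intro h; exact hb.2 (huniq b hb.1 h)
      · intro h; exact hbY (hYc a haY b hb h)
    · push Not at h2
      have : insert v Y = C := by
        apply hconn _ _ ⟨v, Or.inl rfl⟩
        refine ⟨?_, ?_⟩
        · rintro x (rfl | hx)
          · exact hv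
          · exact (hY hx).1
        · rintro x hx y hy hxy
          by_cases hyv : y = v
          · exact Or.inl hyv
          · right
            rcases hx with rfl | hx
            · by_contra hyY
              exact h2 y ⟨hy, hyv⟩ hyY hxy
            · exact hYc x hx y ⟨hy, hyv⟩ hxy
      apply Set.Subset.antisymm hY
      rintro x ⟨hx, hxv⟩
      rw [← this] at hx
      exact hx.resolve_left hxv
  · push Not at h1
    exfalso
    have : Y = C := by
      apply hconn _ _ ⟨y0, hy0⟩
      refine ⟨fun x hx => (hY hx).1, fun x hx y hy hxy => ?_⟩
      by_cases hyv : y = v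
      · subst hyv; exact absurd hxy.symm (h1 x hx)
      · exact hYc x hx y ⟨hy, hyv⟩ hxy
    rw [← this] at hv
    exact (hY hv).2 rfl

theorem migrate {F B C : Set V} (hFB : F ⊆ B) (h : PF G F B) (hC : Cl G Bᶜ C) {t v : V}
    (hU : Uniq G C t v) : PF G F (insert v (B \ {t})) := by
  obtain ⟨hv, htv, huniq⟩ := hU
  obtain ⟨hsub, hcl⟩ := hC
  intro S hS hne
  by_cases htS : t ∈ S
  · apply h S _ hne
    intro x hx
    by_cases hxt : x = t
    · rw [hxt]; exact htS
    · exact hS (Or.inr ⟨hx, hxt⟩)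
  · have hW : ∀ x, x ∉ S → x ≠ t → x ∉ B := fun x hx hxt hxB => hx (hS (Or.inr ⟨hxB, hxt⟩))
    have hvS : v ∈ S := hS (Or.inl rfl)
    refine ⟨v, t, {x | x ∉ S ∧ (x = t ∨ x ∉ C)}, hvS, fun hF => hsub hv (hFB hF), ?_, ?_⟩
    · refine ⟨fun x hx => hx.1, ?_⟩
      rintro x ⟨hxS, hx⟩ y hy hxy
      refine ⟨hy, ?_⟩
      by_contra hcon
      push Not at hcon
      by_cases hxt : x = t
      · subst hxt
        have := huniq y hcon.2 hxy
        subst this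
        exact hy hvS
      · exact (hx.resolve_left hxt) (hcl y hcon.2 x (hW x hxS hxt) hxy.symm)
    · refine ⟨⟨htS, Or.inl rfl⟩, htv.symm, ?_⟩
      rintro w ⟨hwS, hw⟩ hvw
      by_contra hwt
      exact (hw.resolve_left hwt) (hcl v hv w (hW w hwS hwt) hvw)

/-- existence of components -/
theorem exists_comp {W : Set V} {t : V} (ht : t ∈ W) : ∃ K, t ∈ K ∧ Comp G W K := by
  let K : Set V := {x | ∀ X, Cl G W X → t ∈ X → x ∈ X}
  have hmin : ∀ X, Cl G W X → t ∈ X → K ⊆ X := fun X h1 h2 x hx => hx X h1 h2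
  have htK : t ∈ K := fun X _ h => h
  have hKW : K ⊆ W := hmin W ⟨subset_rfl, fun _ _ y hy _ => hy⟩ ht
  have hKcl : Cl G W K :=
    ⟨hKW, fun x hx y hy hxy X hX htX => hX.2 x (hx X hX htX) y hy hxy⟩
  refine ⟨K, htK, ⟨t, htK⟩, hKcl, ?_⟩
  rintro Y ⟨hY, hYc⟩ ⟨y0, hy0⟩
  by_cases htY : t ∈ Y
  · apply Set.Subset.antisymm hY
    apply hmin _ _ htY
    exact ⟨hY.trans hKW, fun x hx y hy hxy => hYc x hx y (hKcl.2 x (hY hx) y hy hxy) hxy⟩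
  · exfalso
    have : K ⊆ K \ Y := by
      refine hmin (K \ Y) ?_ ⟨htK, htY⟩
      refine ⟨fun x hx => hKW hx.1, ?_⟩
      rintro x ⟨hx, hxY⟩ y hy hxy
      exact ⟨hKcl.2 x hx y hy hxy, fun h => hxY (hYc y h x hx hxy.symm)⟩
    exact (this (hY hy0)).2 hy0

theorem ncard_swap [Fintype V] {B : Set V} {t v : V} (ht : t ∈ B) (hv : v ∉ B) :
    (insert v (B \ {t})).ncard = B.ncard := by
  rw [Set.ncard_insert_of_notMem (fun h => hv h.1), Set.ncard_sdiff_singleton_add_one ht]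

/-- direct growth: a vertex adjacent to `K` forces in another component. -/
theorem grow_step [Fintype V] {F B K C : Set V} (hFB : F ⊆ B) (h : PF G F B)
    (hK : Comp G Bᶜ K) (hC : Cl G Bᶜ C) (hKC : ∀ x ∈ K, x ∉ C) {t v k : V} (htB : t ∈ B)
    (htF : t ∉ F) (hU : Uniq G C t v) (hk : k ∈ K) (htk : G.Adj t k) :
    ∃ B' K', F ⊆ B' ∧ B'.ncard = B.ncard ∧ PF G F B' ∧ Comp G B'ᶜ K' ∧ K.ncard < K'.ncard := by
  have hvB : v ∉ B := hC.1 hU.1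
  have hvK : v ∉ K := fun h => hKC v h hU.1
  have hsubK : K ⊆ (insert v (B \ {t}))ᶜ := by
    rintro x hx (rfl | hx')
    · exact hvK hx
    · exact hK.2.1.1 hx hx'.1
  have htW : t ∈ (insert v (B \ {t}))ᶜ := by
    rintro (rfl | hx)
    · exact hvB htB
    · exact hx.2 rfl
  obtain ⟨K', htK', hK'⟩ := exists_comp (G := G) htW
  refine ⟨_, K', ?_, ncard_swap htB hvB, migrate hFB h hC hU, hK', ?_⟩
  · intro x hx
    exact Or.inr ⟨hFB hx, by rintro rfl; exact htF hx⟩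
  · have hkK' : k ∈ K' := hK'.2.1.2 t htK' k (hsubK hk) htk
    have heq : K' ∩ K = K := by
      refine hK.2.2 (K' ∩ K) ?_ ⟨k, hkK', hk⟩
      refine ⟨Set.inter_subset_right, ?_⟩
      rintro x ⟨hx, _⟩ y hy hxy
      exact ⟨hK'.2.1.2 x hx y (hsubK hy) hxy, hy⟩
    apply Set.ncard_lt_ncard _ (Set.toFinite _)
    refine ⟨fun x hx => ?_, fun hsub => hK.2.1.1 (hsub htK') htB⟩
    rw [← heq] at hx
    exact hx.1

theorem grow [Fintype V] (hcf : NoClaw G) (n : ℕ) :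
    ∀ {F B K C : Set V} {u k y : V}, C.ncard = n → F ⊆ B → PF G F B →
    Comp G Bᶜ K → Comp G Bᶜ C → (∀ x ∈ K, x ∉ C) → u ∈ B →
    u ∉ F → k ∈ K → G.Adj u k → y ∈ C → G.Adj u y →
    ∃ B' K', F ⊆ B' ∧ B'.ncard = B.ncard ∧ PF G F B' ∧ Comp G B'ᶜ K' ∧ K.ncard < K'.ncard := by
  induction n using Nat.strong_induction_on with
  | _ n ih =>
  intro F B K C u k y hn hFB h hK hC hKC huB huF hk huk hy huy
  obtain ⟨t, v, htB, htF, hU⟩ := first_force h hC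
  by_cases htK : ∃ k' ∈ K, G.Adj t k'
  · obtain ⟨k', hk', htk'⟩ := htK
    exact grow_step hFB h hK hC.2.1 hKC htB htF hU hk' htk'
  by_cases hy2 : ∃ y' ∈ C, y' ≠ v ∧ G.Adj u y'
  · obtain ⟨y', hy', hyv, huy'⟩ := hy2
    push Not at htK
    have hvB : v ∉ B := hC.2.1.1 hU.1
    have htC : t ∉ C := fun hc => hC.2.1.1 hc htB
    have hut : u ≠ t := by rintro rfl; exact htK k hk huk
    have hcard : (insert v (B \ {t})).ncard = B.ncard := ncard_swap htB hvB
    rw [← hcard]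
    refine ih (C \ {v}).ncard ?_ (F := F) (B := insert v (B \ {t})) (K := K) (C := C \ {v})
      (u := u) (k := k) (y := y') rfl ?_ (migrate hFB h hC.2.1 hU) ?_ ?_ ?_ ?_ huF hk huk
      ⟨hy', hyv⟩ huy'
    · rw [← hn]
      exact Set.ncard_sdiff_singleton_lt_of_mem hU.1
    · intro x hx
      exact Or.inr ⟨hFB hx, by rintro rfl; exact htF hx⟩
    · refine ⟨hK.1, ⟨?_, ?_⟩, hK.2.2⟩
      · rintro x hx (rfl | hx')
        · exact hKC _ hx hU.1
        · exact hK.2.1.1 hx hx'.1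
      · intro x hx w hw hxw
        by_cases hwt : w = t
        · subst hwt; exact absurd hxw.symm (htK x hx)
        · exact hK.2.1.2 x hx w (fun hwB => hw (Or.inr ⟨hwB, hwt⟩)) hxw
    · refine ⟨⟨y', hy', hyv⟩, ⟨?_, ?_⟩, conn_remove hcf hC.2.2 htC hU⟩
      · rintro x ⟨hx, hxv⟩ (rfl | hx')
        · exact hxv rfl
        · exact hC.2.1.1 hx hx'.1
      · rintro x ⟨hx, hxv⟩ w hw hxw
        refine ⟨?_, fun hwv => hw (Or.inl hwv)⟩
        by_cases hwt : w = t
        · subst hwt; exact absurd (hU.2.2 x hx hxw.symm) hxv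
        · exact hC.2.1.2 x hx w (fun hwB => hw (Or.inr ⟨hwB, hwt⟩)) hxw
    · intro x hx hxc
      exact hKC x hx hxc.1
    · exact Or.inr ⟨huB, hut⟩
  · push Not at hy2
    have hyv : y = v := by
      by_contra hne
      exact hy2 y hy hne huy
    subst hyv
    refine grow_step hFB h hK hC.2.1 hKC huB huF (t := u) (v := y) ⟨hy, huy, ?_⟩ hk huk
    intro w hw huw
    by_contra hne
    exact hy2 w hw hne huw

/-- a single connected white set: psd forcing is standard forcing -/
theorem sf_conn [Fintype V] (hcf : NoClaw G) {F : Set V} (n : ℕ) :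
    ∀ {K : Set V}, K.ncard = n → Conn G K → PF G F Kᶜ → SF G F Kᶜ := by
  induction n using Nat.strong_induction_on with
  | _ n ih =>
  intro K hn hK h S hS hne
  by_cases hKe : K.Nonempty
  · have hcomp : Comp G (Kᶜ)ᶜ K := by
      rw [compl_compl]
      exact ⟨hKe, ⟨subset_rfl, fun _ _ y hy _ => hy⟩, hK⟩
    obtain ⟨t, v, ht, htF, hU⟩ := first_force h hcomp
    have hsub : Kᶜ ⊆ (K \ {v})ᶜ := fun x hx hx' => hx hx'.1
    by_cases hv : v ∈ S
    · refine ih (K \ {v}).ncard ?_ rfl (conn_remove hcf hK ht hU) (h.mono hsub) S ?_ hne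
      · rw [← hn]
        exact Set.ncard_sdiff_singleton_lt_of_mem hU.1
      · intro x hx
        by_cases hxv : x = v
        · rw [hxv]; exact hv
        · exact hS (fun hxK => hx ⟨hxK, hxv⟩)
    · refine ⟨t, v, hS ht, htF, hv, hU.2.1, fun w hw htw => hU.2.2 w ?_ htw⟩
      by_contra hwK
      exact hw (hS hwK)
  · exfalso
    apply hne
    apply Set.eq_univ_of_forall
    intro x
    exact hS (fun hx => hKe ⟨x, hx⟩)

theorem main [Fintype V] (hcf : NoClaw G) (n : ℕ) :
    ∀ {F B : Set V}, Fᶜ.ncard = n → F ⊆ B → PF G F B →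
    ∃ B', F ⊆ B' ∧ B'.ncard = B.ncard ∧ SF G F B' := by
  induction n using Nat.strong_induction_on with
  | _ n ih =>
  intro F B0 hn hFB0 h0
  by_cases hB0 : B0 = Set.univ
  · refine ⟨B0, hFB0, rfl, ?_⟩
    intro S hS hne
    exact absurd (Set.univ_subset_iff.1 (hB0 ▸ hS)) hne
  obtain ⟨x0, hx0⟩ := (Set.ne_univ_iff_exists_notMem B0).1 hB0
  obtain ⟨K0, -, hK0⟩ := exists_comp (G := G) (W := B0ᶜ) hx0
  let P : Set (Set V × Set V) :=
    {p | F ⊆ p.1 ∧ p.1.ncard = B0.ncard ∧ PF G F p.1 ∧ Comp G p.1ᶜ p.2}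
  obtain ⟨⟨B, K⟩, ⟨hFB, hcard, h, hK⟩, hmax⟩ :=
    Set.exists_max_image P (fun p => p.2.ncard) (Set.toFinite P)
      ⟨(B0, K0), hFB0, rfl, h0, hK0⟩
  simp only at hFB hcard h hK hmax
  have hBK : ∀ x ∈ K, x ∉ B := hK.2.1.1
  have hcl := hK.2.1.2
  have hun : ∀ u ∈ B, u ∉ F → ∀ k ∈ K, G.Adj u k → ∀ y, y ∉ B → y ∉ K → ¬ G.Adj u y := by
    intro u huB huF k hk huk y hyB hyK huy
    obtain ⟨C, hyC, hC⟩ := exists_comp (G := G) (W := Bᶜ) hyB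
    have hKC : ∀ x ∈ K, x ∉ C := by
      intro x hx hxC
      have h1 : K ∩ C = C := by
        refine hC.2.2 (K ∩ C) ?_ ⟨x, hx, hxC⟩
        refine ⟨Set.inter_subset_right, ?_⟩
        rintro a ⟨ha, _⟩ b hb hab
        exact ⟨hcl a ha b (hC.2.1.1 hb) hab, hb⟩
      rw [← h1] at hyC
      exact hyK hyC.1
    obtain ⟨B', K', h1, h2, h3, h4, h5⟩ :=
      grow hcf C.ncard rfl hFB h hK hC hKC huB huF hk huk hyC huy
    have := hmax (B', K') ⟨h1, h2.trans hcard, h3, h4⟩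
    simp only at this
    omega
  let F' : Set V := {x | x ∈ F ∨ x ∈ K ∨ (x ∈ B ∧ ∃ k ∈ K, G.Adj x k)}
  obtain ⟨k0, hk0⟩ := hK.1
  obtain ⟨B2, hFB2, hcard2, hSF2⟩ := ih F'ᶜ.ncard
    (by
      rw [← hn]
      apply Set.ncard_lt_ncard _ (Set.toFinite _)
      refine ⟨fun x hx hxF => hx (Or.inl hxF), fun hs => ?_⟩
      exact hs (fun hF => hBK k0 hk0 (hFB hF)) (Or.inr (Or.inl hk0)))
    (F := F') (B := B ∪ K) rfl
    (by
      rintro x (hx | hx | hx)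
      · exact Or.inl (hFB hx)
      · exact Or.inr hx
      · exact Or.inl hx.1)
    (by
      intro S hS hne
      obtain ⟨u, v, X, hu, huF, hX, hU⟩ := h S (Set.subset_union_left.trans hS) hne
      refine ⟨u, v, X, hu, ?_, hX, hU⟩
      have hvS : v ∉ S := hX.1 hU.1
      have hvB : v ∉ B := fun hv => hvS (hS (Or.inl hv))
      have hvK : v ∉ K := fun hv => hvS (hS (Or.inr hv))
      rintro (h1 | h1 | ⟨h1, k, hk, huk⟩)
      · exact huF h1
      · exact hvK (hcl u h1 v hvB hU.2.1)
      · exact hun u h1 huF k hk huk v hvB hvK hU.2.1)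
  have hKB2 : K ⊆ B2 := fun x hx => hFB2 (Or.inr (Or.inl hx))
  refine ⟨B2 \ K, ?_, ?_, ?_⟩
  · intro x hx
    exact ⟨hFB2 (Or.inl hx), fun hxK => hBK x hxK (hFB hx)⟩
  · have h1 := Set.ncard_sdiff_add_ncard_of_subset hKB2 (Set.toFinite _)
    have h2 : (B ∪ K).ncard = B.ncard + K.ncard :=
      Set.ncard_union_eq (Set.disjoint_left.2 fun x hx hxK => hBK x hxK hx)
    omega
  · intro S hS hne
    by_cases hSK : S ∪ K = Set.univ
    · refine sf_conn hcf K.ncard rfl hK.2.2 (h.mono fun x hx hxK => hBK x hxK hx) S ?_ hne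
      intro x hx
      have : x ∈ S ∪ K := by rw [hSK]; trivial
      exact this.resolve_right hx
    · obtain ⟨u, v, hu, huF, hv, huv, hun2⟩ := hSF2 (S ∪ K)
        (by
          intro x hx
          by_cases hxK : x ∈ K
          · exact Or.inr hxK
          · exact Or.inl (hS ⟨hx, hxK⟩)) hSK
      have huK : u ∉ K := fun hk => huF (Or.inr (Or.inl hk))
      refine ⟨u, v, hu.resolve_right huK, fun hF => huF (Or.inl hF), fun hvS => hv (Or.inl hvS),
        huv, ?_⟩
      intro w hw huw
      apply hun2 w _ huw
      rintro (hwS | hwK)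
      · exact hw hwS
      · by_cases huB : u ∈ B
        · exact huF (Or.inr (Or.inr ⟨huB, w, hwK, huw⟩))
        · exact huK (hcl w hwK u huB huw.symm)

theorem pf_of_derives {B T : Set V} (h : Derives (PSDStep G) B T) :
    ∀ S, B ⊆ S → ¬ T ⊆ S →
      ∃ u v X, u ∈ S ∧ u ∉ (∅ : Set V) ∧ Cl G Sᶜ X ∧ Uniq G X u v := by
  induction h with
  | refl => intro S h1 h2; exact absurd h1 h2
  | @tail T u v hd hstep ih =>
    intro S hBS hTS
    by_cases hT : T ⊆ S
    · have hvS : v ∉ S := by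
        intro hv
        apply hTS
        rintro x (rfl | hx)
        · exact hv
        · exact hT hx
      obtain ⟨huT, huv, hvT, huniq⟩ := hstep
      refine ⟨u, v, {w | w ∉ S ∧ ∃ hw : w ∈ Tᶜ,
        (G.induce (Tᶜ : Set V)).Reachable ⟨v, hvT⟩ ⟨w, hw⟩}, hT huT, id, ⟨fun x hx => hx.1, ?_⟩,
        ⟨hvS, hvT, Reachable.refl _⟩, huv, ?_⟩
      · rintro x ⟨hxS, hxT, hr⟩ y hy hxy
        have hyT : y ∈ Tᶜ := fun h => hy (hT h)
        refine ⟨hy, hyT, hr.trans (Adj.reachable ?_)⟩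
        simpa using hxy
      · rintro w ⟨hwS, hwT, hr⟩ huw
        exact huniq w hwT huw hr
    · exact ih S hBS hT

theorem derives_of_sf [Fintype V] {B : Set V} (h : SF G ∅ B) (n : ℕ) :
    ∀ S, Sᶜ.ncard = n → B ⊆ S → Derives (StdStep G) B S → Derives (StdStep G) B Set.univ := by
  induction n using Nat.strong_induction_on with
  | _ n ih =>
  intro S hn hBS hd
  by_cases hS : S = Set.univ
  · rw [← hS]; exact hd
  obtain ⟨u, v, hu, -, hv, huv, hun⟩ := h S hBS hS
  refine ih (insert v S)ᶜ.ncard ?_ (insert v S) rfl (hBS.trans (Set.subset_insert _ _))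
    (Derives.tail hd ⟨hu, hv, huv, fun w h1 h2 => hun w h2 h1⟩)
  rw [← hn]
  apply Set.ncard_lt_ncard _ (Set.toFinite _)
  exact ⟨fun x hx hxS => hx (Or.inr hxS), fun hs => hs hv (Or.inl rfl)⟩

theorem psd_of_std {B T : Set V} (h : Derives (StdStep G) B T) : Derives (PSDStep G) B T := by
  induction h with
  | refl => exact Derives.refl _
  | tail _ hs ih =>
    exact Derives.tail ih ⟨hs.1, hs.2.2.1, hs.2.1, fun w hw huw _ => hs.2.2.2 w huw hw⟩

end ClawAux

/-- If `G` is any (not necessarily connected) claw-free finite simple graph,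
then `Z₊(G) = Z(G)`. -/
theorem clawFree_Zplus_eq_Z {V : Type*} [Fintype V] (G : SimpleGraph V)
    (hclaw : ClawFree G) : Zplus G = Z G := by
  unfold Zplus Z
  congr 1
  ext n
  constructor
  · rintro ⟨B, hB, hn⟩
    have hPF : ClawAux.PF G ∅ B := fun S hBS hne =>
      ClawAux.pf_of_derives hB S hBS (fun h => hne (Set.univ_subset_iff.1 h))
    obtain ⟨B', -, hc, hSF⟩ := ClawAux.main (ClawAux.noClaw_of_clawFree hclaw) _ rfl
      (Set.empty_subset B) hPF
    exact ⟨B', ClawAux.derives_of_sf hSF _ B' rfl subset_rfl (Derives.refl _), hc.trans hn⟩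
  · rintro ⟨B, hB, hn⟩
    exact ⟨B, ClawAux.psd_of_std hB, hn⟩
end

section
/- A finite simple graph G is (Z_+, Z)-perfect if and only if G is claw-free; that is, Z_+(H) = Z(H) holds for every induced subgraph H of G if and only if G contains no induced subgraph isomorphic to K_{1,3}. -/
open SimpleGraph

namespace ZFP

/-- Local form of claw-freeness. -/
def CF {V : Type*} (G : SimpleGraph V) : Prop :=
  ∀ c x y z : V, G.Adj c x → G.Adj c y → G.Adj c z → x ≠ y → x ≠ z → y ≠ z →
    ¬ G.Adj x y → ¬ G.Adj x z → ¬ G.Adj y z → False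

/-- The white set `C` can be cleared by the PSD rule. -/
inductive Clr {V : Type*} (G : SimpleGraph V) : Set V → Prop
  | empty : Clr G ∅
  | step {C K : Set V} {u v : V} : u ∉ C → v ∈ K → K ⊆ C →
      (∀ x ∈ K, ∀ y ∈ C, G.Adj x y → y ∈ K) → G.Adj u v →
      (∀ w ∈ K, G.Adj u w → w = v) → Clr G (C \ {v}) → Clr G C

theorem Clr.mono {V : Type*} {G : SimpleGraph V} {C : Set V} (h : Clr G C) :
    ∀ C1 : Set V, C1 ⊆ C → Clr G C1 := by
  induction h with
  | empty =>
    intro C1 h1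
    rw [Set.subset_empty_iff.mp h1]
    exact Clr.empty
  | @step C K u v hu hv hK hcl huv huniq _ ih =>
    intro C1 h1
    by_cases hv1 : v ∈ C1
    · refine Clr.step (K := K ∩ C1) (u := u) (v := v) (fun h => hu (h1 h)) ⟨hv, hv1⟩
        Set.inter_subset_right ?_ huv ?_ (ih _ ?_)
      · intro x hx y hy hxy
        exact ⟨hcl x hx.1 y (h1 hy) hxy, hy⟩
      · intro w hw; exact huniq w hw.1
      · intro x hx; exact ⟨h1 hx.1, hx.2⟩
    · apply ih
      intro x hx
      refine ⟨h1 hx, ?_⟩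
      rintro rfl
      exact hv1 hx

/-- Standard forcing runs within the window `W`; `A` active vertices, `T` retired vertices. -/
inductive Reach {V : Type*} (G : SimpleGraph V) (W B D : Set V) : Set V → Set V → Prop
  | refl : Reach G W B D B D
  | step {A T : Set V} {u v : V} : Reach G W B D A T → u ∈ A → v ∈ W → v ∉ A → v ∉ T →
      G.Adj u v → (∀ w ∈ W, G.Adj u w → w = v ∨ w ∈ A ∨ w ∈ T) →
      Reach G W B D (insert v (A \ {u})) (insert u T)

theorem Reach.trans {V : Type*} {G : SimpleGraph V} {W B D A T A' T' : Set V}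
    (h1 : Reach G W B D A T) (h2 : Reach G W A T A' T') : Reach G W B D A' T' := by
  induction h2 with
  | refl => exact h1
  | step _ a b c d e f ih => exact Reach.step ih a b c d e f

theorem Reach.disj {V : Type*} {G : SimpleGraph V} {W B D A T : Set V}
    (h : Reach G W B D A T) (h0 : ∀ x ∈ B, x ∉ D) : ∀ x ∈ A, x ∉ T := by
  induction h with
  | refl => exact h0
  | step _ a b c d e f ih => grind

theorem Reach.ncard {V : Type*} [Finite V] {G : SimpleGraph V} {W B D A T : Set V}
    (h : Reach G W B D A T) : A.ncard = B.ncard := by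
  induction h with
  | refl => rfl
  | step _ a b c d e f ih =>
    rw [Set.ncard_insert_of_notMem (by grind), Set.ncard_sdiff_singleton_add_one a, ih]

theorem Reach.closed {V : Type*} {G : SimpleGraph V} {B A T : Set V}
    (h : Reach G Set.univ B ∅ A T) : ∀ t ∈ T, ∀ w, G.Adj t w → w ∈ A ∨ w ∈ T := by
  induction h with
  | refl => grind
  | step _ a b c d e f ih => grind

/-- Extend the window and add a dead set `E`. -/
theorem Reach.extend {V : Type*} {G : SimpleGraph V} {W B D A T : Set V}
    (h : Reach G W B D A T) (W' E : Set V) (hW : W ⊆ W') (hE : ∀ x ∈ E, x ∉ W)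
    (hT : ∀ u ∈ T, ∀ w ∈ W', w ∉ W → G.Adj u w → w ∈ E) :
    Reach G W' B (D ∪ E) A (T ∪ E) := by
  induction h with
  | refl => exact Reach.refl
  | @step A T u v _ a b c d e f ih =>
    have := ih (fun x hx => hT x (Set.mem_insert_of_mem _ hx))
    rw [Set.insert_union]
    refine Reach.step this a (hW b) c ?_ e ?_
    · grind
    · intro w hw huw
      have := hT u (Set.mem_insert _ _) w hw
      grind

/-- Replace a never-touched part `Q` of the start by `R`. -/
theorem Reach.modify {V : Type*} {G : SimpleGraph V} {B A T : Set V}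
    (h : Reach G Set.univ B ∅ A T) (Q R : Set V)
    (hQA : Q ⊆ A) (hQ : ∀ t ∈ T, ∀ q ∈ Q, ¬ G.Adj t q)
    (hR : ∀ r ∈ R, (r ∈ A ∨ r ∈ T) → r ∈ Q) (hAT : ∀ x ∈ A, x ∉ T) :
    Reach G Set.univ ((B \ Q) ∪ R) ∅ ((A \ Q) ∪ R) T := by
  induction h with
  | refl => exact Reach.refl
  | @step A T u v hr a b c d e f ih =>
    have huQ : ∀ q ∈ Q, ¬ G.Adj u q := hQ u (Set.mem_insert _ _)
    have hd := hr.disj (by simp)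
    have h1 := ih (by grind) (by grind) (by grind) hd
    have h2 : Reach G Set.univ ((B \ Q) ∪ R) ∅ (insert v (((A \ Q) ∪ R) \ {u})) (insert u T) := by
      refine Reach.step h1 (by grind) b (by grind) d e ?_
      intro w hw huw
      have := f w hw huw
      grind
    convert h2 using 1
    ext x
    grind

theorem Reach.derives {V : Type*} {G : SimpleGraph V} {B A T : Set V}
    (h : Reach G Set.univ B ∅ A T) : Derives (StdStep G) B (A ∪ T) := by
  induction h with
  | refl => rw [Set.union_empty]; exact Derives.refl _
  | @step A T u v hr a b c d e f ih =>
    have : insert v (A \ {u}) ∪ insert u T = insert v (A ∪ T) := by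
      ext x; grind
    rw [this]
    refine Derives.tail (u := u) ih ⟨Or.inl a, ?_, e, ?_⟩
    · grind
    · intro w hw hn
      have := f w (Set.mem_univ _) hw
      grind

/-- Vertices of `X` which see `C` have a private witness. -/
def Wit {V : Type*} (G : SimpleGraph V) (X Y C : Set V) : Prop :=
  ∀ x ∈ X, (∃ c ∈ C, G.Adj x c) → ∃ t, t ∉ C ∧ G.Adj x t ∧ (∀ c ∈ C, ¬ G.Adj t c) ∧
    ∀ y ∈ Y, (∃ c ∈ C, G.Adj y c) → ¬ G.Adj t y

theorem Wit.clique {V : Type*} {G : SimpleGraph V} (hcf : CF G) {X Y C : Set V}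
    (h : Wit G X Y C) {x c c' : V} (hx : x ∈ X) (hc : c ∈ C) (hc' : c' ∈ C) (h1 : G.Adj x c)
    (h2 : G.Adj x c') (hne : c ≠ c') : G.Adj c c' := by
  obtain ⟨t, ht, hxt, htc, -⟩ := h x hx ⟨c, hc, h1⟩
  by_contra hn
  exact hcf x t c c' hxt h1 h2 (by grind) (by grind) hne (htc c hc) (htc c' hc') hn

theorem Wit.eq {V : Type*} {G : SimpleGraph V} (hcf : CF G) {X Y C : Set V}
    (h : Wit G X Y C) (hY : ∀ y ∈ Y, y ∉ C) {x y c : V} (hx : x ∈ X) (hy : y ∈ Y)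
    (hxy : G.Adj x y)
    (hyC : ∃ c ∈ C, G.Adj y c) (hc : c ∈ C) (h1 : G.Adj x c) : G.Adj y c := by
  obtain ⟨t, ht, hxt, htc, hty⟩ := h x hx ⟨c, hc, h1⟩
  by_contra hn
  exact hcf x t y c hxt hxy h1 (by grind) (by grind) (by grind) (hty y hy hyC) (htc c hc) hn

theorem main {V : Type*} [Finite V] {G : SimpleGraph V} (hcf : CF G) {C : Set V}
    (hC : Clr G C) : ∀ X Y : Set V, (∀ a ∈ X, a ∉ C) → (∀ a ∈ Y, a ∉ C) →
    (∀ a ∈ X, a ∈ Y → ∀ c ∈ C, ¬ G.Adj a c) →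
    (∀ c ∈ C, ∀ w, G.Adj c w → w ∈ X ∨ w ∈ Y ∨ w ∈ C) →
    Wit G X Y C → Wit G Y X C →
    ∃ B A T, Reach G (X ∪ Y ∪ C) B ∅ A T ∧ A ∪ T = X ∪ Y ∪ C ∧ X ⊆ B ∧ B ⊆ X ∪ Y ∪ C ∧
      B.ncard = (X ∪ Y).ncard ∧ Y ⊆ A := by
  induction hC with
  | empty =>
    intro X Y _ _ _ _ _ _
    exact ⟨X ∪ Y, X ∪ Y, ∅, Reach.refl, by simp, by simp, by simp, rfl, by simp⟩
  | @step C K b v hb hvK hK hcl hbv huniq hC' ih =>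
    intro X Y hXC hYC hXY hnb hwX hwY
    have hvC : v ∈ C := hK hvK
    have hbXY : b ∈ X ∨ b ∈ Y := by
      have := hnb v hvC b hbv.symm
      grind
    have hb1 : ∀ w ∈ C, G.Adj b w → w = v := by
      intro w hw hbw
      by_contra hne
      have hadj : G.Adj v w := by
        rcases hbXY with h | h
        · exact hwX.clique hcf h hvC hw hbv hbw (Ne.symm hne)
        · exact hwY.clique hcf h hvC hw hbv hbw (Ne.symm hne)
      exact hne (huniq w (hcl v hvK w hw hadj) hbw)
    have hvX : v ∉ X := fun h => hXC v h hvC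
    have hvY : v ∉ Y := fun h => hYC v h hvC
    have hsub : ∀ z, (∃ c ∈ C \ {v}, G.Adj z c) → ∃ c ∈ C, G.Adj z c := by grind
    by_cases hbX : b ∈ X
    · have hbY : b ∉ Y := fun h => hXY b hbX h v hvC hbv
      have hby : ∀ y ∈ Y, G.Adj b y → ∀ c ∈ C \ {v}, ¬ G.Adj y c := by
        intro y hy hby c hc hyc
        have := hwY.eq hcf hXC hy hbX hby.symm ⟨v, hvC, hbv⟩ hc.1 hyc
        exact hc.2 (hb1 c hc.1 this)
      set X' : Set V := {a | (a ∈ X ∧ a ≠ b) ∨ a = v ∨ (a ∈ Y ∧ ∀ c ∈ C \ {v}, ¬ G.Adj a c)}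
        with hX'
      have hU : X' ∪ Y = insert v ((X ∪ Y) \ {b}) := by
        clear ih hwX hwY
        ext x; grind
      have hW1 : Wit G X' Y (C \ {v}) := by
        rintro x hx hxc
        rcases hx with ⟨hx, hne⟩ | rfl | ⟨hx, hn⟩
        · obtain ⟨t, h1, h2, h3, h4⟩ := hwX x hx (hsub x hxc)
          exact ⟨t, by grind, h2, by grind, fun y hy hyc => h4 y hy (hsub y hyc)⟩
        · refine ⟨b, by grind, hbv.symm, by grind, ?_⟩
          rintro y hy ⟨c, hc, hyc⟩ hby'
          exact hby y hy hby' c hc hyc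
        · grind
      have hW2 : Wit G Y X' (C \ {v}) := by
        intro y hy hyc
        obtain ⟨t, h1, h2, h3, h4⟩ := hwY y hy (hsub y hyc)
        refine ⟨t, by grind, h2, by grind, ?_⟩
        rintro x (⟨hx, hne⟩ | rfl | ⟨hx, hn⟩) hxc
        · exact h4 x hx (hsub x hxc)
        · exact h3 _ hvC
        · grind
      obtain ⟨B, A, T, hr, hAT, hXB, hBs, hcard, hYA⟩ := ih X' Y (by grind) (by grind)
        (by grind) (by
          intro c hc w hcw
          have := hnb c hc.1 w hcw
          have : w ≠ b := by
            rintro rfl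
            exact hc.2 (hb1 c hc.1 hcw.symm)
          grind) hW1 hW2
      have hbW : b ∉ X' ∪ Y ∪ (C \ {v}) := by grind
      have hbB : b ∉ B := fun h => hbW (hBs h)
      have hvB : v ∈ B := hXB (by grind)
      have hWeq : X ∪ Y ∪ C = insert b (X' ∪ Y ∪ (C \ {v})) := by
        ext x; grind
      have hr2 := hr.extend (X ∪ Y ∪ C) {b} (by rw [hWeq]; exact Set.subset_insert _ _)
        (by grind) (by grind)
      have hstart : Reach G (X ∪ Y ∪ C) (insert b (B \ {v})) ∅
          (insert v ((insert b (B \ {v})) \ {b})) (insert b ∅) := by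
        refine Reach.step Reach.refl (by grind) (by grind) ?_ (by simp) hbv ?_
        · have := hbv.ne
          grind
        · intro w hw hbw
          by_cases hwv : w = v
          · exact Or.inl hwv
          · right; left
            have := hbw.ne
            have : w ∈ X' := by
              have := hb1 w
              have := hby w
              grind
            exact Set.mem_insert_of_mem _ ⟨hXB this, hwv⟩
      have e1 : insert v ((insert b (B \ {v})) \ {b}) = B := by
        ext x; grind
      have e2 : (insert b ∅ : Set V) = ∅ ∪ {b} := by simp
      rw [e1, e2] at hstart
      refine ⟨_, _, _, hstart.trans hr2, ?_, ?_, ?_, ?_, hYA⟩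
      · rw [← Set.union_assoc, hAT, hWeq]; ext x; grind
      · intro x hx
        by_cases hxb : x = b
        · exact hxb ▸ Set.mem_insert _ _
        · exact Set.mem_insert_of_mem _ ⟨hXB (Or.inl ⟨hx, hxb⟩), by grind⟩
      · rw [hWeq]; grind
      · rw [Set.ncard_insert_of_notMem (by grind), Set.ncard_sdiff_singleton_add_one hvB, hcard]
        rw [hU, Set.ncard_insert_of_notMem (by grind),
          Set.ncard_sdiff_singleton_add_one (show b ∈ X ∪ Y from Or.inl hbX)]
    · have hbY : b ∈ Y := by grind
      have hbx : ∀ x ∈ X, G.Adj b x → ∀ c ∈ C \ {v}, ¬ G.Adj x c := by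
        intro x hx hbx c hc hxc
        have := hwX.eq hcf hYC hx hbY hbx.symm ⟨v, hvC, hbv⟩ hc.1 hxc
        exact hc.2 (hb1 c hc.1 this)
      set Y' : Set V := {a | (a ∈ Y ∧ a ≠ b) ∨ a = v ∨ (a ∈ X ∧ ∀ c ∈ C \ {v}, ¬ G.Adj a c)}
        with hY'
      have hU : X ∪ Y' = insert v ((X ∪ Y) \ {b}) := by
        clear ih hwX hwY
        ext x; grind
      have hW1 : Wit G Y' X (C \ {v}) := by
        rintro x hx hxc
        rcases hx with ⟨hx, hne⟩ | rfl | ⟨hx, hn⟩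
        · obtain ⟨t, h1, h2, h3, h4⟩ := hwY x hx (hsub x hxc)
          exact ⟨t, by grind, h2, by grind, fun y hy hyc => h4 y hy (hsub y hyc)⟩
        · refine ⟨b, by grind, hbv.symm, by grind, ?_⟩
          rintro y hy ⟨c, hc, hyc⟩ hby'
          exact hbx y hy hby' c hc hyc
        · grind
      have hW2 : Wit G X Y' (C \ {v}) := by
        intro y hy hyc
        obtain ⟨t, h1, h2, h3, h4⟩ := hwX y hy (hsub y hyc)
        refine ⟨t, by grind, h2, by grind, ?_⟩
        rintro x (⟨hx, hne⟩ | rfl | ⟨hx, hn⟩) hxc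
        · exact h4 x hx (hsub x hxc)
        · exact h3 _ hvC
        · grind
      obtain ⟨B, A, T, hr, hAT, hXB, hBs, hcard, hYA⟩ := ih X Y' (by grind) (by grind)
        (by grind) (by
          intro c hc w hcw
          have := hnb c hc.1 w hcw
          have : w ≠ b := by
            rintro rfl
            exact hc.2 (hb1 c hc.1 hcw.symm)
          grind) hW2 hW1
      have hdis := hr.disj (by simp)
      have hbW : b ∉ X ∪ Y' ∪ (C \ {v}) := by grind
      have hWeq : X ∪ Y ∪ C = insert b (X ∪ Y' ∪ (C \ {v})) := by
        ext x; grind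
      have hvA : v ∈ A := hYA (by grind)
      have hr2 := hr.extend (X ∪ Y ∪ C) ∅ (by rw [hWeq]; exact Set.subset_insert _ _)
        (by grind) (by
          intro u hu w hw hwn huw
          exfalso
          have hwb : w = b := by grind
          subst hwb
          have huA : u ∉ A := fun h => hdis u h hu
          have huY : u ∉ Y' := fun h => huA (hYA h)
          have huW : u ∈ X ∪ Y' ∪ (C \ {v}) := by rw [← hAT]; exact Or.inr hu
          have := hb1 u
          have := hbx u
          have := huw.symm
          grind)
      rw [Set.union_empty, Set.union_empty] at hr2
      have hbAT : b ∉ A ∪ T := by rw [hAT]; exact hbW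
      have hfin := Reach.step (u := v) (v := b) hr2 hvA (by grind) (by grind) (by grind) hbv.symm
        (by
          intro w hw hvw
          rw [hWeq, ← hAT] at hw
          grind)
      refine ⟨_, _, _, hfin, ?_, hXB, ?_, ?_, ?_⟩
      · rw [hWeq, ← hAT]; ext x; grind
      · rw [hWeq]; grind
      · rw [hcard]
        rw [hU, Set.ncard_insert_of_notMem (by grind),
          Set.ncard_sdiff_singleton_add_one (show b ∈ X ∪ Y from Or.inr hbY)]
      · intro y hy
        by_cases hyb : y = b
        · exact hyb ▸ Set.mem_insert _ _
        · exact Set.mem_insert_of_mem _ ⟨hYA (Or.inl ⟨hy, hyb⟩), by grind⟩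

theorem outer {V : Type*} [Finite V] {G : SimpleGraph V} (hcf : CF G) (n : ℕ) :
    ∀ m : ℕ, ∀ B A T C : Set V, Reach G Set.univ B ∅ A T → ((A ∪ T)ᶜ).ncard = n →
      Clr G (A ∪ T)ᶜ → C ⊆ (A ∪ T)ᶜ → C.Nonempty → (∀ x ∈ C, ∀ y ∈ (A ∪ T)ᶜ, G.Adj x y → y ∈ C) →
      C.ncard = m → ∃ B', IsStdForcingSet G B' ∧ B'.ncard = B.ncard := by
  induction n using Nat.strong_induction_on with
  | _ n ihn =>
  have next : ∀ B A T : Set V, Reach G Set.univ B ∅ A T → ((A ∪ T)ᶜ).ncard < n →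
      Clr G (A ∪ T)ᶜ → ∃ B', IsStdForcingSet G B' ∧ B'.ncard = B.ncard := by
    intro B A T hr hlt hclr
    by_cases hne : ((A ∪ T)ᶜ).Nonempty
    · exact ihn _ hlt _ B A T _ hr rfl hclr subset_rfl hne (fun _ _ y hy _ => hy) rfl
    · refine ⟨B, ?_, rfl⟩
      have : A ∪ T = Set.univ := by
        rw [Set.not_nonempty_iff_eq_empty, Set.compl_empty_iff] at hne
        exact hne
      unfold IsStdForcingSet
      rw [← this]
      exact hr.derives
  intro m
  induction m using Nat.strong_induction_on with
  | _ m ihm =>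
  intro B A T C hr hn hclr hCO hCne hCcl hm
  have hdis := hr.disj (by simp)
  have hTcl := hr.closed
  have hCclr := hclr.mono C hCO
  cases hCclr with
  | empty => exact absurd hCne Set.not_nonempty_empty
  | @step _ K b v hb hvK hK hcl hbv huniq _ =>
  by_cases hKC : K = C
  swap
  · refine ihm K.ncard ?_ B A T K hr hn hclr (hK.trans hCO) ⟨v, hvK⟩ ?_ rfl
    · rw [← hm]; exact Set.ncard_lt_ncard (hK.ssubset_of_ne hKC)
    · intro x hx y hy hxy
      exact hcl x hx y (hCcl x (hK hx) y hy hxy) hxy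
  subst hKC
  have hvO : v ∉ A ∧ v ∉ T := by have := hCO hvK; grind
  have hbA : b ∈ A := by
    have h1 := hCcl v hvK b
    have h2 := hTcl b
    have := hbv.symm
    grind
  have hbT : b ∉ T := hdis b hbA
  -- a mover without other white neighbours advances
  have adv : ∀ a ∈ A, ∀ z ∈ K, G.Adj a z → (∀ w ∈ K, G.Adj a w → w = z) →
      (∀ w, w ∉ A → w ∉ T → w ∉ K → ¬ G.Adj a w) →
      ∃ B', IsStdForcingSet G B' ∧ B'.ncard = B.ncard := by
    intro a ha z hz haz hzu ho
    have hzO : z ∉ A ∧ z ∉ T := by have := hCO hz; grind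
    have hst := Reach.step hr ha (Set.mem_univ z) hzO.1 hzO.2 haz (by grind)
    have hsub : (insert z (A \ {a}) ∪ insert a T)ᶜ ⊂ (A ∪ T)ᶜ := by
      rw [Set.ssubset_iff_of_subset (by intro x; grind)]
      exact ⟨z, by grind, by grind⟩
    refine next _ _ _ hst ?_ (hclr.mono _ hsub.subset)
    rw [← hn]
    exact Set.ncard_lt_ncard hsub
  by_cases hbo : ∀ w, w ∉ A → w ∉ T → w ∉ K → ¬ G.Adj b w
  · exact adv b hbA v hvK hbv huniq hbo
  -- vertices seeing two white parts do not see `T`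
  have noT : ∀ a ∈ A, ∀ c ∈ K, G.Adj a c → ∀ d, d ∉ A → d ∉ T → d ∉ K → G.Adj a d →
      ∀ t ∈ T, ¬ G.Adj a t := by
    intro a ha c hc hac d hd1 hd2 hd3 had t ht hat
    have hcO : c ∉ A ∧ c ∉ T := by have := hCO hc; grind
    have h1 := hCcl c hc d (by grind)
    have h2 := hTcl t ht
    exact hcf a c d t hac had hat (by grind) (by grind) (by grind) (by grind)
      (fun h => by have := h2 c h.symm; grind) (fun h => by have := h2 d h.symm; grind)
  by_cases hfree : ∃ x ∈ A, (∃ c ∈ K, G.Adj x c) ∧ (∀ w, w ∉ A → w ∉ T → w ∉ K → ¬ G.Adj x w) ∧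
      ∀ t ∈ T, ¬ G.Adj x t
  · obtain ⟨x, hxA, ⟨c, hc, hxc⟩, hxo, hxT⟩ := hfree
    by_cases hK1 : ∀ w ∈ K, w = v
    · exact adv x hxA c hc hxc (by grind) hxo
    · push Not at hK1
      obtain ⟨k, hkK, hkv⟩ := hK1
      push Not at hbo
      obtain ⟨d, hdA, hdT, hdK, hbd⟩ := hbo
      have hbnT := noT b hbA v hvK hbv d hdA hdT hdK hbd
      have hmod := hr.modify {b} {v} (by grind) (by
        intro t ht q hq
        rw [Set.mem_singleton_iff] at hq
        subst hq
        exact fun h => hbnT t ht h.symm) (by grind) hdis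
      have hBc : ((B \ {b}) ∪ {v}).ncard = B.ncard := by
        have h1 := hmod.ncard
        have h2 := hr.ncard
        rw [← h1, ← h2, Set.union_singleton, Set.ncard_insert_of_notMem (by grind),
          Set.ncard_sdiff_singleton_add_one hbA]
      have hO' : ((A \ {b}) ∪ {v} ∪ T)ᶜ = insert b ((A ∪ T)ᶜ \ {v}) := by
        ext x
        have hvb := hbv.ne
        by_cases hxb : x = b
        · subst hxb; simp [hvb, hbT]
        · simp only [Set.mem_compl_iff, Set.mem_union, Set.mem_sdiff, Set.mem_singleton_iff,
            Set.mem_insert_iff]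
          tauto
      have hvb := hbv.ne
      have hbO : b ∉ (A ∪ T)ᶜ := fun h => h (Or.inl hbA)
      have hvO' : v ∈ (A ∪ T)ᶜ := hCO hvK
      obtain ⟨B', h1, h2⟩ := ihm (K \ {v}).ncard (by
          rw [← hm]; exact Set.ncard_sdiff_singleton_lt_of_mem hvK) _ _ _ (K \ {v}) hmod (by
          rw [hO', Set.ncard_insert_of_notMem (fun h => hbO h.1),
            Set.ncard_sdiff_singleton_add_one hvO', hn]) (by
          rw [hO']
          refine Clr.step (K := insert b ((A ∪ T)ᶜ \ K)) (u := v) (v := b)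
            (by
              rintro (h | h)
              · exact hvb h.symm
              · exact h.2 rfl) (Set.mem_insert _ _)
            (Set.insert_subset_insert fun z hz => ⟨hz.1, fun h => hz.2 (by
              rw [Set.mem_singleton_iff] at h
              exact h ▸ hvK)⟩) ?_ hbv.symm ?_ (hclr.mono _ (by
              rintro z ⟨rfl | h, hz⟩
              · exact absurd rfl hz
              · exact h.1))
          · intro x hx y hy hxy
            by_contra hyn
            have hyK : y ∈ K := by
              by_contra hyK
              rcases hy with rfl | hy
              · exact hyn (Set.mem_insert _ _)
              · exact hyn (Set.mem_insert_of_mem _ ⟨hy.1, hyK⟩)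
            rcases hx with rfl | hx
            · have hyv := huniq y hyK hxy
              subst hyv
              rcases hy with h | h
              · exact hvb h.symm
              · exact h.2 rfl
            · exact hx.2 (hCcl y hyK x hx.1 hxy.symm)
          · intro w hw hvw
            rcases hw with rfl | hw
            · rfl
            · exact absurd (hCcl v hvK w hw.1 hvw) hw.2) (by
          rw [hO']
          intro y hy
          exact Set.mem_insert_of_mem _ ⟨hCO hy.1, hy.2⟩) ⟨k, hkK, hkv⟩ (by
          rw [hO']
          intro x hx y hy hxy
          rcases hy with rfl | hy
          · exact absurd (huniq x hx.1 hxy.symm) hx.2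
          · exact ⟨hCcl x hx.1 y hy.1 hxy, hy.2⟩) rfl
      exact ⟨B', h1, h2.trans hBc⟩
  push Not at hfree
  set X : Set V := {a | a ∈ A ∧ ((∀ c ∈ K, ¬ G.Adj a c) ∨
    ∀ w, w ∉ A → w ∉ T → w ∉ K → ¬ G.Adj a w)} with hX
  set Y : Set V := {a | a ∈ A ∧ ((∀ c ∈ K, ¬ G.Adj a c) ∨
    ∃ w, w ∉ A ∧ w ∉ T ∧ w ∉ K ∧ G.Adj a w)} with hY
  have hXYA : X ∪ Y = A := by
    ext a
    constructor
    · rintro (h | h) <;> exact h.1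
    · intro ha
      by_cases h : ∃ w, w ∉ A ∧ w ∉ T ∧ w ∉ K ∧ G.Adj a w
      · exact Or.inr ⟨ha, Or.inr h⟩
      · left; refine ⟨ha, Or.inr ?_⟩; push Not at h; exact h
  have hKO : ∀ c ∈ K, c ∉ A ∧ c ∉ T := by intro c hc; have := hCO hc; grind
  have hKT : ∀ t ∈ T, ∀ c ∈ K, ¬ G.Adj t c := by
    intro t ht c hc h
    have := hTcl t ht c h
    have := hKO c hc
    grind
  obtain ⟨B1, A1, T1, hr1, hAT1, hXB1, hB1, hc1, hYA1⟩ := main hcf (hclr.mono K hCO) X Y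
    (by intro a ha h; exact (hKO a h).1 ha.1) (by intro a ha h; exact (hKO a h).1 ha.1)
    (by
      rintro a ⟨ha, h1⟩ ⟨-, h2⟩
      rcases h1 with h1 | h1
      · exact h1
      · rcases h2 with h2 | ⟨w, hw1, hw2, hw3, hw4⟩
        · exact h2
        · exact absurd hw4 (h1 w hw1 hw2 hw3))
    (by
      intro c hc w hcw
      have h1 := hCcl c hc w
      have h2 : w ∉ T := fun h => hKT w h c hc hcw.symm
      have h3 : w ∈ A → w ∈ X ∪ Y := by rw [hXYA]; exact id
      by_cases hwA : w ∈ A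
      · rcases h3 hwA with h | h
        · exact Or.inl h
        · exact Or.inr (Or.inl h)
      · exact Or.inr (Or.inr (h1 (by grind) hcw)))
    (by
      rintro x ⟨hxA, hx⟩ ⟨c, hc, hxc⟩
      have hxo : ∀ w, w ∉ A → w ∉ T → w ∉ K → ¬ G.Adj x w := by
        rcases hx with h | h
        · exact absurd hxc (h c hc)
        · exact h
      obtain ⟨t, ht, hxt⟩ := hfree x hxA ⟨c, hc, hxc⟩ hxo
      refine ⟨t, fun h => (hKO t h).2 ht, hxt, hKT t ht, ?_⟩
      rintro y ⟨hyA, hy⟩ ⟨c', hc', hyc'⟩ hty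
      rcases hy with h | ⟨w, hw1, hw2, hw3, hw4⟩
      · exact h c' hc' hyc'
      · exact noT y hyA c' hc' hyc' w hw1 hw2 hw3 hw4 t ht hty.symm)
    (by
      rintro y ⟨hyA, hy⟩ ⟨c, hc, hyc⟩
      rcases hy with h | ⟨d, hd1, hd2, hd3, hd4⟩
      · exact absurd hyc (h c hc)
      refine ⟨d, hd3, hd4, ?_, ?_⟩
      · intro c' hc' h
        exact hd3 (hCcl c' hc' d (by grind) h.symm)
      · rintro x ⟨hxA, hx⟩ ⟨c', hc', hxc'⟩ hdx
        rcases hx with h | h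
        · exact h c' hc' hxc'
        · exact h d hd1 hd2 hd3 hdx.symm)
  rw [hXYA] at hr1 hAT1 hB1 hc1
  have hdis1 := hr1.disj (by simp)
  have hXA : X ⊆ A := fun x hx => hx.1
  have hYA : Y ⊆ A := fun x hx => hx.1
  have hmod := hr.modify (Y \ X) (B1 \ X) (by intro x hx; exact hYA hx.1) (by
      rintro t ht q ⟨⟨hqA, hq⟩, hqX⟩ htq
      have hq1 : ¬ ∀ c ∈ K, ¬ G.Adj q c := fun h => hqX ⟨hqA, Or.inl h⟩
      rcases hq with h | ⟨w, hw1, hw2, hw3, hw4⟩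
      · exact hq1 h
      · push Not at hq1
        obtain ⟨c, hc, hqc⟩ := hq1
        exact noT q hqA c hc hqc w hw1 hw2 hw3 hw4 t ht htq.symm) (by
      rintro r ⟨hr1, hrX⟩ hrAT
      have hrA : r ∈ A := by
        rcases hB1 hr1 with h | h
        · exact h
        · have := hKO r h
          grind
      rw [← hXYA] at hrA
      rcases hrA with h | h
      · exact absurd h hrX
      · exact ⟨h, hrX⟩) hdis
  have e1 : (A \ (Y \ X)) ∪ (B1 \ X) = B1 := by
    ext x
    have : x ∈ A ↔ x ∈ X ∨ x ∈ Y := by rw [← hXYA]; rfl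
    have := @hXB1 x
    simp only [Set.mem_union, Set.mem_sdiff]
    tauto
  have hmc := hmod.ncard
  rw [e1] at hmod hmc
  have hr2 := hr1.extend Set.univ T (Set.subset_univ _) (by
      rintro x hx (h | h)
      · exact hdis x h hx
      · exact (hKO x h).2 hx) (by
      intro u hu w _ hw huw
      have huA1 : u ∉ A1 := fun h => hdis1 u h hu
      have huY : u ∉ Y := fun h => huA1 (hYA1 h)
      have huW : u ∈ A ∪ K := by rw [← hAT1]; exact Or.inr hu
      by_contra hwT
      have hwA : w ∉ A := fun h => hw (Or.inl h)
      have hwK : w ∉ K := fun h => hw (Or.inr h)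
      rcases huW with h | h
      · exact huY ⟨h, Or.inr ⟨w, hwA, hwT, hwK, huw⟩⟩
      · exact hwK (hCcl u h w (by grind) huw))
  rw [Set.empty_union] at hr2
  have hall := hmod.trans hr2
  have hsub : (A1 ∪ (T1 ∪ T))ᶜ ⊂ (A ∪ T)ᶜ := by
    rw [← Set.union_assoc, hAT1, Set.ssubset_iff_of_subset (by intro x; grind)]
    exact ⟨v, by grind, by grind⟩
  obtain ⟨B', h1, h2⟩ := next _ _ _ hall (by rw [← hn]; exact Set.ncard_lt_ncard hsub)
    (hclr.mono _ hsub.subset)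
  refine ⟨B', h1, ?_⟩
  rw [h2, ← hmc, hc1, hr.ncard]

theorem psd_clr {V : Type*} {G : SimpleGraph V} {B S : Set V} (h : Derives (PSDStep G) B S) :
    Clr G Sᶜ → Clr G Bᶜ := by
  induction h with
  | refl => exact id
  | @tail T u v _ hs ih =>
    intro hc
    apply ih
    obtain ⟨hu, huv, hv, huniq⟩ := hs
    refine Clr.step (u := u) (v := v)
      (K := {w | ∃ hw : w ∈ Tᶜ, (G.induce (Tᶜ : Set V)).Reachable ⟨v, hv⟩ ⟨w, hw⟩})
      (by simpa using hu) ⟨hv, Reachable.refl _⟩ (fun w hw => hw.1) ?_ huv ?_ ?_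
    · rintro x ⟨hx, hrx⟩ y hy hxy
      refine ⟨hy, hrx.trans (Adj.reachable ?_)⟩
      simpa using hxy
    · rintro w ⟨hw, hrw⟩ huw
      exact huniq w hw huw hrw
    · convert hc using 1
      ext x
      grind

theorem psd_to_std {V : Type*} [Finite V] {G : SimpleGraph V} (hcf : CF G) {B : Set V}
    (h : IsPSDForcingSet G B) : ∃ B', IsStdForcingSet G B' ∧ B'.ncard = B.ncard := by
  have hc : Clr G Bᶜ := psd_clr h (by rw [Set.compl_univ]; exact Clr.empty)
  by_cases hne : (Bᶜ).Nonempty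
  · exact outer hcf _ _ B B ∅ Bᶜ Reach.refl rfl (by simpa using hc) (by simp) hne
      (by simp; tauto) rfl
  · refine ⟨B, ?_, rfl⟩
    rw [Set.not_nonempty_iff_eq_empty, Set.compl_empty_iff] at hne
    rw [hne]
    exact Derives.refl _

theorem std_to_psd {V : Type*} {G : SimpleGraph V} {B S : Set V}
    (h : Derives (StdStep G) B S) : Derives (PSDStep G) B S := by
  induction h with
  | refl => exact Derives.refl _
  | tail _ hs ih =>
    exact Derives.tail ih ⟨hs.1, hs.2.2.1, hs.2.1, fun w hw huw _ => hs.2.2.2 w huw hw⟩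

theorem Zplus_eq_Z {V : Type*} [Finite V] {G : SimpleGraph V} (hcf : CF G) :
    Zplus G = Z G := by
  unfold Zplus Z
  congr 1
  ext n
  constructor
  · rintro ⟨B, hB, rfl⟩
    exact psd_to_std hcf hB
  · rintro ⟨B, hB, rfl⟩
    exact ⟨B, std_to_psd hB, rfl⟩

theorem cf_of_clawFree {V : Type*} {G : SimpleGraph V} (h : ClawFree G) : CF G := by
  intro c x y z hx hy hz hxy hxz hyz nxy nxz nyz
  apply h
  let f : Fin 1 ⊕ Fin 3 → V := Sum.elim (fun _ => c) ![x, y, z]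
  have hf : Function.Injective f := by
    have := hx.ne
    have := hy.ne
    have := hz.ne
    rintro (a | a) (b | b) hab <;> fin_cases a <;> fin_cases b <;> simp_all [f]
  refine ⟨Set.range f, ⟨RelIso.symm ⟨Equiv.ofInjective f hf, ?_⟩⟩⟩
  have nyx : ¬ G.Adj y x := fun h => nxy h.symm
  have nzx : ¬ G.Adj z x := fun h => nxz h.symm
  have nzy : ¬ G.Adj z y := fun h => nyz h.symm
  rintro (a | a) (b | b) <;> fin_cases a <;> fin_cases b <;>
    simp [f, hx, hy, hz, hx.symm, hy.symm, hz.symm, nxy, nxz, nyz, nyx, nzx, nzy]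

theorem claw_ne {V : Type*} {H : SimpleGraph V}
    (e : H ≃g completeBipartiteGraph (Fin 1) (Fin 3)) : Zplus H ≠ Z H := by
  classical
  have : Finite V := Finite.of_equiv _ e.symm.toEquiv
  obtain ⟨c, l, hl, hall, hcl, hll, hlc⟩ : ∃ (c : V) (l : Fin 3 → V), Function.Injective l ∧
      (∀ x, x = c ∨ ∃ i, x = l i) ∧ (∀ i, H.Adj c (l i)) ∧ (∀ i j, ¬ H.Adj (l i) (l j)) ∧
      (∀ i, l i ≠ c) := by
    refine ⟨e.symm (Sum.inl 0), fun i => e.symm (Sum.inr i), ?_, ?_, ?_, ?_, ?_⟩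
    · intro i j hij
      simpa using hij
    · intro x
      rcases hx : e x with a | a
      · left
        rw [← Subsingleton.elim a 0, ← hx, e.symm_apply_apply]
      · right
        exact ⟨a, by show x = e.symm (Sum.inr a); rw [← hx, e.symm_apply_apply]⟩
    · intro i
      rw [e.symm.map_adj_iff]; simp
    · intro i j
      rw [e.symm.map_adj_iff]; simp
    · intro i h
      simp at h
  have hp : Zplus H ≤ 1 := by
    apply Nat.sInf_le
    refine ⟨{c}, ?_, Set.ncard_singleton c⟩
    have hstep : ∀ S : Set V, c ∈ S → ∀ i, l i ∉ S → PSDStep H S c (l i) := by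
      intro S hc i hi
      refine ⟨hc, hcl i, hi, ?_⟩
      intro w hw _ hr
      obtain ⟨p⟩ := hr
      cases p with
      | nil => rfl
      | @cons _ z _ hadj _ =>
        exfalso
        have hadj' : H.Adj (l i) z.1 := by simpa using hadj
        rcases hall z.1 with h | ⟨j, h⟩
        · exact z.2 (h ▸ hc)
        · rw [h] at hadj'
          exact hll i j hadj'
    have h01 : l 0 ≠ l 1 := fun h => by simpa using hl h
    have h02 : l 0 ≠ l 2 := fun h => by simpa using hl h
    have h12 : l 1 ≠ l 2 := fun h => by simpa using hl h
    have d0 := Derives.tail (Derives.refl {c}) (hstep {c} (by simp) 0 (by simp [hlc]))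
    have d1 := Derives.tail d0 (hstep _ (by simp) 1 (by simp [hlc, h01.symm]))
    have d2 := Derives.tail d1 (hstep _ (by simp) 2 (by simp [hlc, h02.symm, h12.symm]))
    unfold IsPSDForcingSet
    convert d2 using 1
    symm
    rw [Set.eq_univ_iff_forall]
    intro x
    rcases hall x with h | ⟨i, h⟩
    · simp [h]
    · fin_cases i <;> simp_all
  have hz : 2 ≤ Z H := by
    refine le_csInf ⟨_, Set.univ, Derives.refl _, rfl⟩ ?_
    rintro n ⟨B, hB, rfl⟩
    by_contra hlt
    have hB1 : ∃ i, B ⊆ {l i, c} := by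
      rcases (Set.ncard_le_one_iff_eq (Set.toFinite B)).mp (by omega) with h | ⟨a, h⟩
      · exact ⟨0, by simp [h]⟩
      · rcases hall a with h' | ⟨i, h'⟩
        · exact ⟨0, by simp [h, h']⟩
        · exact ⟨i, by simp [h, h']⟩
    obtain ⟨i, hBi⟩ := hB1
    obtain ⟨j, k, hij, hik, hjk⟩ : ∃ j k : Fin 3, j ≠ i ∧ k ≠ i ∧ j ≠ k := by
      fin_cases i
      · exact ⟨1, 2, by decide⟩
      · exact ⟨0, 2, by decide⟩
      · exact ⟨0, 1, by decide⟩
    have hj : l j ∉ ({l i, c} : Set V) := by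
      simp [hlc, hl.eq_iff, hij]
    have hk : l k ∉ ({l i, c} : Set V) := by
      simp [hlc, hl.eq_iff, hik]
    have hinv : ∀ S B : Set V, Derives (StdStep H) B S → B ⊆ {l i, c} → S ⊆ {l i, c} := by
      intro S B h hB
      induction h with
      | refl => exact hB
      | @tail T u v _ hs ih =>
        obtain ⟨hu, hv, huv, hun⟩ := hs
        rcases ih hu with h | h
        · subst h
          rcases hall v with h' | ⟨m, h'⟩
          · exact Set.insert_subset (by simp [h']) ih
          · rw [h'] at huv
            exact absurd huv (hll _ _)
        · have h : u = c := h
          subst h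
          have h1 := hun (l j) (hcl j) (fun h => hj (ih h))
          have h2 := hun (l k) (hcl k) (fun h => hk (ih h))
          exact absurd (hl (h1.trans h2.symm)) hjk
    exact hj (hinv _ _ hB hBi (Set.mem_univ _))
  omega

end ZFP

/-- A finite simple graph is `(Z₊, Z)`-perfect (i.e. `Z₊(H) = Z(H)` for every
induced subgraph `H` of `G`) if and only if it is claw-free. -/
theorem ZplusZ_perfect_iff_clawFree {V : Type*} [Fintype V] (G : SimpleGraph V) :
    (∀ s : Set V, Zplus (G.induce s) = Z (G.induce s)) ↔ ClawFree G := by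
  constructor
  · rintro h ⟨s, ⟨e⟩⟩
    exact ZFP.claw_ne e (h s)
  · intro h s
    apply ZFP.Zplus_eq_Z
    intro c x y z h1 h2 h3 n1 n2 n3 m1 m2 m3
    exact ZFP.cf_of_clawFree h c x y z h1 h2 h3 (fun e => n1 (Subtype.ext e))
      (fun e => n2 (Subtype.ext e)) (fun e => n3 (Subtype.ext e)) m1 m2 m3
end

section
/- Let G be a connected finite simple graph and let S be a minimum positive semidefinite zero forcing set of G. If the induced subgraph G − S is disconnected, then for every connected component C of G − S there exists another minimum positive semidefinite zero forcing set S' of G such that G − S' has a connected component C' that properly contains C (i.e., the vertex set of C is a proper subset of the vertex set of C'). -/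
open SimpleGraph

/-- `D` is closed under adjacency outside `S`. -/
def Clo {V : Type*} (G : SimpleGraph V) (S D : Set V) : Prop :=
  ∀ a ∈ D, ∀ b, b ∉ S → G.Adj a b → b ∈ D

/-- `D` is (the vertex set of) a component of `G - S`. -/
def Comp {V : Type*} (G : SimpleGraph V) (S D : Set V) : Prop :=
  D ⊆ Sᶜ ∧ D.Nonempty ∧ Clo G S D ∧ ∀ a ∈ D, ∀ E, Clo G S E → a ∈ E → D ⊆ E

theorem reach_clo {V : Type*} {G : SimpleGraph V} {S E : Set V} (hE : Clo G S E)
    {a b : (Sᶜ : Set V)} (h : (G.induce (Sᶜ : Set V)).Reachable a b) (ha : a.1 ∈ E) :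
    b.1 ∈ E := by
  obtain ⟨p⟩ := h
  induction p with
  | nil => exact ha
  | @cons _ q _ h p ih => exact ih (hE _ ha _ q.2 (by simpa using h))

theorem comp_supp {V : Type*} {G : SimpleGraph V} {S : Set V}
    (C : (G.induce (Sᶜ : Set V)).ConnectedComponent) :
    Comp G S (Subtype.val '' C.supp) := by
  refine ⟨?_, ?_, ?_, ?_⟩
  · rintro _ ⟨a, _, rfl⟩; exact a.2
  · exact C.nonempty_supp.image _
  · rintro _ ⟨a, ha, rfl⟩ b hb hab
    refine ⟨⟨b, hb⟩, ?_, rfl⟩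
    rw [ConnectedComponent.mem_supp_iff] at ha ⊢
    rw [← ha, ConnectedComponent.eq]
    exact (Adj.reachable (by simpa using hab)).symm
  · rintro _ ⟨a, ha, rfl⟩ E hE haE _ ⟨b, hb, rfl⟩
    rw [ConnectedComponent.mem_supp_iff] at ha hb
    exact reach_clo hE (ConnectedComponent.eq.1 (ha.trans hb.symm)) haE

theorem exists_comp {V : Type*} (G : SimpleGraph V) (S : Set V) (a : V) (ha : a ∉ S) :
    ∃ D, Comp G S D ∧ a ∈ D :=
  ⟨_, comp_supp ((G.induce (Sᶜ : Set V)).connectedComponentMk ⟨a, ha⟩), ⟨a, ha⟩, rfl, rfl⟩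

theorem step_iff {V : Type*} {G : SimpleGraph V} {S : Set V} {u v : V} :
    PSDStep G S u v ↔ u ∈ S ∧ G.Adj u v ∧ ∃ E : Set V, E ⊆ Sᶜ ∧ v ∈ E ∧ Clo G S E ∧
      ∀ w ∈ E, G.Adj u w → w = v := by
  constructor
  · rintro ⟨hu, huv, hv, h⟩
    refine ⟨hu, huv, _, (comp_supp ((G.induce (Sᶜ : Set V)).connectedComponentMk ⟨v, hv⟩)).1,
      ⟨⟨v, hv⟩, rfl, rfl⟩, (comp_supp _).2.2.1, ?_⟩
    rintro _ ⟨w, hw, rfl⟩ huw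
    rw [ConnectedComponent.mem_supp_iff, ConnectedComponent.eq] at hw
    exact h _ w.2 huw hw.symm
  · rintro ⟨hu, huv, E, hES, hvE, hE, h⟩
    exact ⟨hu, huv, hES hvE, fun w hw huw hr => h w (reach_clo hE hr hvE) huw⟩

theorem derives_trans {V : Type*} {step : Set V → V → V → Prop} {A B D : Set V}
    (h1 : Derives step A B) (h2 : Derives step B D) : Derives step A D := by
  induction h2 with
  | refl => exact h1
  | tail _ hs ih => exact Derives.tail ih hs

theorem derives_subset {V : Type*} {step : Set V → V → V → Prop} {A B : Set V}
    (h1 : Derives step A B) : A ⊆ B := by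
  induction h1 with
  | refl => exact subset_rfl
  | tail _ hs ih => exact ih.trans (Set.subset_insert _ _)

theorem step_mono {V : Type*} {G : SimpleGraph V} {S T : Set V} {u v : V}
    (h : PSDStep G S u v) (hST : S ⊆ T) (hv : v ∉ T) : PSDStep G T u v := by
  rw [step_iff] at h ⊢
  obtain ⟨hu, huv, E, hES, hvE, hE, h⟩ := h
  refine ⟨hST hu, huv, E \ T, fun a ha => ha.2, ⟨hvE, hv⟩, ?_, fun w hw => h w hw.1⟩
  intro a ha b hb hab
  exact ⟨hE a ha.1 b (fun h => hb (hST h)) hab, hb⟩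

theorem derives_mono {V : Type*} {G : SimpleGraph V} {S A : Set V}
    (h : Derives (PSDStep G) S A) : ∀ T, S ⊆ T → ∃ A', A ⊆ A' ∧ Derives (PSDStep G) T A' := by
  induction h with
  | refl => exact fun T hT => ⟨T, hT, Derives.refl T⟩
  | @tail B u v _ hs ih =>
    intro T hT
    obtain ⟨A', hA', hd⟩ := ih T hT
    by_cases hv : v ∈ A'
    · exact ⟨A', Set.insert_subset hv hA', hd⟩
    · exact ⟨insert v A', Set.insert_subset_insert hA', Derives.tail hd (step_mono hs hA' hv)⟩

theorem forcing_mono {V : Type*} {G : SimpleGraph V} {S T : Set V}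
    (h : IsPSDForcingSet G S) (hST : S ⊆ T) : IsPSDForcingSet G T := by
  obtain ⟨A', hA', hd⟩ := derives_mono h T hST
  rw [Set.univ_subset_iff] at hA'
  subst hA'
  exact hd

theorem exists_force_s3 {V : Type*} {G : SimpleGraph V} {S A D : Set V} (hD : Comp G S D)
    (h : Derives (PSDStep G) S A) (hA : ∃ a ∈ A, a ∈ D) :
    ∃ u ∈ S, ∃ v ∈ D, G.Adj u v ∧ ∀ w ∈ D, G.Adj u w → w = v := by
  induction h with
  | refl =>
    obtain ⟨a, ha, haD⟩ := hA
    exact absurd ha (hD.1 haD)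
  | @tail T u v hd hs ih =>
    by_cases hT : ∃ a ∈ T, a ∈ D
    · exact ih hT
    obtain ⟨a, ha, haD⟩ := hA
    rcases ha with rfl | ha
    swap
    · exact absurd ⟨a, ha, haD⟩ hT
    obtain ⟨hu, huv, E, hES, hvE, hE, h⟩ := step_iff.1 hs
    have huS : u ∈ S := by
      by_contra hn
      exact hT ⟨u, hu, hD.2.2.1 _ haD _ hn huv.symm⟩
    have hsub : D ⊆ D ∩ E := by
      refine hD.2.2.2 _ haD _ ?_ ⟨haD, hvE⟩
      intro p hp q hq hpq
      have hqD := hD.2.2.1 _ hp.1 _ hq hpq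
      exact ⟨hqD, hE _ hp.2 _ (fun hqT => hT ⟨q, hqT, hqD⟩) hpq⟩
    exact ⟨u, huS, a, haD, huv, fun w hw => h w (hsub hw).2⟩

theorem exchange {V : Type*} [Fintype V] {G : SimpleGraph V} {S D : Set V} {u v : V}
    (hS : IsMinPSDForcingSet G S) (hD : Comp G S D) (hu : u ∈ S) (hv : v ∈ D)
    (huv : G.Adj u v) (hun : ∀ w ∈ D, G.Adj u w → w = v) :
    IsMinPSDForcingSet G (insert v (S \ {u})) := by
  have hvS : v ∉ S := hD.1 hv
  have huD : u ∉ D := fun h => hD.1 h hu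
  have hcl := hD.2.2.1
  constructor
  · have hstep : PSDStep G (insert v (S \ {u})) v u := by
      rw [step_iff]
      refine ⟨Set.mem_insert _ _, huv.symm, (insert v (S \ {u}) ∪ D)ᶜ, ?_, ?_, ?_, ?_⟩
      · exact Set.compl_subset_compl.2 Set.subset_union_left
      · have := huv.ne
        simp [huD, this]
      · intro a ha b hb hab
        rintro (hb' | hbD)
        · exact hb hb'
        have hbv : b ≠ v := fun h => hb (Or.inl h)
        have ha1 : a ∉ D := fun h => ha (Or.inr h)
        by_cases hau : a = u
        · subst hau; exact hbv (hun b hbD hab)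
        · have : a ∉ S := fun h => ha (Or.inl (Or.inr ⟨h, hau⟩))
          exact ha1 (hcl _ hbD _ this hab.symm)
      · intro w hw hvw
        by_contra hwu
        have : w ∉ S := fun h => hw (Or.inl (Or.inr ⟨h, hwu⟩))
        exact hw (Or.inr (hcl _ hv _ this hvw))
    refine derives_trans (Derives.tail (Derives.refl _) hstep) (forcing_mono hS.1 ?_)
    intro a ha
    by_cases hau : a = u
    · exact Or.inl hau
    · exact Or.inr (Or.inr ⟨ha, hau⟩)
  · intro B hB
    rw [Set.ncard_exchange hvS hu]
    exact hS.2 B hB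

theorem merge {V : Type*} [Fintype V] {G : SimpleGraph V} {S D C : Set V} {u v c : V}
    (hS : IsMinPSDForcingSet G S) (hD : Comp G S D) (hC : Comp G S C) (hCD : Disjoint C D)
    (hu : u ∈ S) (hv : v ∈ D)
    (huv : G.Adj u v) (hun : ∀ w ∈ D, G.Adj u w → w = v) (hc : c ∈ C) (huc : G.Adj u c) :
    ∃ S' : Set V, IsMinPSDForcingSet G S' ∧
        ∃ C' : (G.induce (S'ᶜ : Set V)).ConnectedComponent,
          C ⊂ (Subtype.val '' C'.supp) := by
  have huS' : u ∉ insert v (S \ {u}) := by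
    have := huv.ne
    simp [this]
  refine ⟨_, exchange hS hD hu hv huv hun,
    (G.induce ((insert v (S \ {u}))ᶜ : Set V)).connectedComponentMk ⟨u, huS'⟩, ?_⟩
  set K := (G.induce ((insert v (S \ {u}))ᶜ : Set V)).connectedComponentMk ⟨u, huS'⟩ with hK
  have hcomp := comp_supp K
  have huK : u ∈ Subtype.val '' K.supp := ⟨⟨u, huS'⟩, rfl, rfl⟩
  have key : ∀ b ∈ C, b ∉ insert v (S \ {u}) := by
    rintro b hb (h | h)
    · exact Set.disjoint_left.1 hCD hb (h ▸ hv)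
    · exact hC.1 hb h.1
  have hsub : C ⊆ C ∩ (Subtype.val '' K.supp) := by
    refine hC.2.2.2 c hc _ ?_ ⟨hc, hcomp.2.2.1 _ huK _ (key c hc) huc⟩
    intro a ha b hb hab
    have hbC := hC.2.2.1 _ ha.1 _ hb hab
    exact ⟨hbC, hcomp.2.2.1 _ ha.2 _ (key b hbC) hab⟩
  exact ⟨fun a ha => (hsub ha).2, fun h => hC.1 (h huK) hu⟩

theorem descend {V : Type*} [Fintype V] {G : SimpleGraph V} {C : Set V} {x c : V}
    (hc : c ∈ C) (hxc : G.Adj x c) : ∀ (n : ℕ) (S D : Set V), D.ncard = n →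
    IsMinPSDForcingSet G S → Comp G S D → Comp G S C → Disjoint C D → x ∈ S →
    (∃ d ∈ D, G.Adj x d) →
    ∃ S' : Set V, IsMinPSDForcingSet G S' ∧
        ∃ C' : (G.induce (S'ᶜ : Set V)).ConnectedComponent,
          C ⊂ (Subtype.val '' C'.supp) := by
  intro n
  induction n using Nat.strong_induction_on with
  | _ n ih =>
  intro S D hn hS hD hC hCD hx hxd
  obtain ⟨u, hu, v, hv, huv, hun⟩ : ∃ u ∈ S, ∃ v ∈ D, G.Adj u v ∧ ∀ w ∈ D, G.Adj u w → w = v := by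
    obtain ⟨d, hd, -⟩ := hxd
    exact exists_force_s3 hD hS.1 ⟨d, trivial, hd⟩
  by_cases huC : ∃ e ∈ C, G.Adj u e
  · obtain ⟨e, he, hue⟩ := huC
    exact merge hS hD hC hCD hu hv huv hun he hue
  by_cases hex : ∃ w ∈ D, w ≠ v ∧ G.Adj x w
  swap
  · obtain ⟨d, hd, hxd⟩ := hxd
    have hall : ∀ w ∈ D, G.Adj x w → w = v := by
      intro w hw hxw
      by_contra hne
      exact hex ⟨w, hw, hne, hxw⟩
    have := hall d hd hxd
    subst this
    exact merge hS hD hC hCD hx hd hxd hall hc hxc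
  obtain ⟨w, hw, hwv, hxw⟩ := hex
  have hxu : x ≠ u := fun h => huC ⟨c, hc, h ▸ hxc⟩
  have hwS : w ∉ insert v (S \ {u}) := by
    rintro (h | h)
    · exact hwv h
    · exact hD.1 hw h.1
  obtain ⟨D', hD', hwD'⟩ := exists_comp G _ w hwS
  have hsub : D' ⊆ D \ {v} := by
    refine hD'.2.2.2 w hwD' _ ?_ ⟨hw, hwv⟩
    intro a ha b hb hab
    have hbv : b ≠ v := fun h => hb (Or.inl h)
    refine ⟨?_, hbv⟩
    by_cases hbu : b = u
    · subst hbu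
      exact absurd (hun a ha.1 hab.symm) ha.2
    · exact hD.2.2.1 _ ha.1 _ (fun h => hb (Or.inr ⟨h, hbu⟩)) hab
  have hlt : D'.ncard < n := by
    rw [← hn]
    refine Set.ncard_lt_ncard ⟨hsub.trans Set.sdiff_subset, fun h => (hsub (h hv)).2 rfl⟩
      (Set.toFinite _)
  refine ih _ hlt _ D' rfl (exchange hS hD hu hv huv hun) hD' ?_
    (hCD.mono_right (hsub.trans Set.sdiff_subset)) (Or.inr ⟨hx, hxu⟩) ⟨w, hwD', hxw⟩
  refine ⟨?_, hC.2.1, ?_, ?_⟩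
  · rintro b hb (h | h)
    · exact Set.disjoint_left.1 hCD hb (h ▸ hv)
    · exact hC.1 hb h.1
  · intro a ha b hb hab
    by_cases hbu : b = u
    · subst hbu
      exact absurd ⟨a, ha, hab.symm⟩ huC
    · exact hC.2.2.1 _ ha _ (fun h => hb (Or.inr ⟨h, hbu⟩)) hab
  · intro a ha E hE haE
    have : C ⊆ C ∩ E := by
      refine hC.2.2.2 a ha _ ?_ ⟨ha, haE⟩
      intro p hp q hq hpq
      have hqC := hC.2.2.1 _ hp.1 _ hq hpq
      refine ⟨hqC, hE _ hp.2 _ ?_ hpq⟩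
      rintro (h | h)
      · exact Set.disjoint_left.1 hCD hqC (h ▸ hv)
      · exact hq h.1
    exact fun b hb => (this hb).2

theorem drop {V : Type*} {G : SimpleGraph V} {S A C : Set V} {x : V}
    (hC : Comp G S C) (hx : x ∈ S) (hxn : ∀ y, G.Adj x y → y ∉ C → y ∈ S)
    (h : Derives (PSDStep G) S A) :
    Derives (PSDStep G) (S \ {x}) (A \ (insert x C)) := by
  induction h with
  | refl =>
    have : S \ (insert x C) = S \ {x} := by
      ext a
      have := @hC.1 a
      simp at this ⊢
      tauto
    rw [this]
    exact Derives.refl _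
  | @tail T u v hd hs ih =>

    by_cases hv : v ∈ insert x C
    · rwa [Set.insert_diff_of_mem _ hv]
    rw [Set.insert_diff_of_notMem _ hv]
    refine Derives.tail (u := u) ih ?_
    have hST := derives_subset hd
    obtain ⟨hu, huv, E, hES, hvE, hE, h⟩ := step_iff.1 hs
    have hvS : v ∉ S := fun h => hES hvE (hST h)
    have hvC : v ∉ C := fun h => hv (Or.inr h)
    refine step_iff.2 ⟨⟨hu, ?_⟩, huv, E \ insert x C, ?_, ⟨hvE, hv⟩, ?_, fun w hw => h w hw.1⟩
    · rintro (rfl | huC)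
      · exact hvS (hxn v huv hvC)
      · exact hvC (hC.2.2.1 _ huC _ hvS huv)
    · exact fun a ha ha' => hES ha.1 ha'.1
    · intro a ha b hb hab
      have haC : a ∉ C := fun h => ha.2 (Or.inr h)
      have haS : a ∉ S := fun h => hES ha.1 (hST h)
      have hbn : b ∉ insert x C := by
        rintro (rfl | hbC)
        · exact haS (hxn a hab.symm haC)
        · exact haC (hC.2.2.1 _ hbC _ haS hab.symm)
      exact ⟨hE _ ha.1 _ (fun h => hb ⟨h, hbn⟩) hab, hbn⟩

/-- If `G` is connected, `S` is a minimum positive semidefinite zero forcing set,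
and `G − S` is disconnected, then for every component `C` of `G − S` there is
another minimum positive semidefinite zero forcing set `S'` such that `G − S'`
has a component `C'` properly containing `C`. -/
theorem exists_minPSD_with_larger_component {V : Type*} [Fintype V] (G : SimpleGraph V)
    (hconn : G.Connected) (S : Set V) (hS : IsMinPSDForcingSet G S)
    (hdisc : ¬ (G.induce (Sᶜ : Set V)).Connected) :
    ∀ C : (G.induce (Sᶜ : Set V)).ConnectedComponent,
      ∃ S' : Set V, IsMinPSDForcingSet G S' ∧
        ∃ C' : (G.induce (S'ᶜ : Set V)).ConnectedComponent,
          (Subtype.val '' C.supp) ⊂ (Subtype.val '' C'.supp) := by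
  intro C0
  obtain ⟨C, hCdef⟩ : ∃ C, C = Subtype.val '' C0.supp := ⟨_, rfl⟩
  have hC : Comp G S C := hCdef ▸ comp_supp C0
  rw [← hCdef]
  by_cases hA : ∃ x ∈ S, (∃ c ∈ C, G.Adj x c) ∧ ∃ y, y ∉ S ∧ y ∉ C ∧ G.Adj x y
  · obtain ⟨x, hx, ⟨c, hc, hxc⟩, y, hyS, hyC, hxy⟩ := hA
    obtain ⟨D, hD, hyD⟩ := exists_comp G S y hyS
    refine descend hc hxc _ S D rfl hS hD hC ?_ hx ⟨y, hyD, hxy⟩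
    rw [Set.disjoint_left]
    intro a haC haD
    exact hyC (hD.2.2.2 a haD C hC.2.2.1 haC hyD)
  exfalso
  have hxn : ∀ x ∈ S, (∃ c ∈ C, G.Adj x c) → ∀ y, G.Adj x y → y ∉ C → y ∈ S := by
    intro x hx hxc y hxy hyC
    by_contra hyS
    exact hA ⟨x, hx, hxc, y, hyS, hyC, hxy⟩
  by_cases hB : ∃ x ∈ S, (∃ c ∈ C, G.Adj x c) ∧ ∃ y ∈ S, G.Adj x y ∧ ∀ c ∈ C, ¬ G.Adj y c
  · obtain ⟨x, hx, hxc, y, hyS, hxy, hyC⟩ := hB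
    have h1 := drop hC hx (hxn x hx hxc) hS.1
    have h2 : PSDStep G (Set.univ \ insert x C) y x := by
      refine step_iff.2 ⟨⟨trivial, ?_⟩, hxy.symm, insert x C, ?_, Set.mem_insert _ _, ?_, ?_⟩
      · rintro (h | h)
        · exact hxy.ne h.symm
        · exact hC.1 h hyS
      · exact fun a ha ha' => ha'.2 ha
      · intro a _ b hb _
        by_contra hn
        exact hb ⟨trivial, hn⟩
      · rintro w (rfl | hw) hyw
        · rfl
        · exact absurd hyw (hyC w hw)
    have h3 : IsPSDForcingSet G (insert x (Set.univ \ insert x C)) := by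
      refine forcing_mono hS.1 ?_
      intro a ha
      by_cases hax : a = x
      · exact Or.inl hax
      · refine Or.inr ⟨trivial, ?_⟩
        rintro (h | h)
        · exact hax h
        · exact hC.1 h ha
    have h4 := hS.2 _ (derives_trans (Derives.tail h1 h2) h3)
    have h5 := Set.ncard_sdiff_singleton_lt_of_mem hx (Set.toFinite S)
    omega
  · -- everything lies in the closed neighborhood of `C`
    have hall : ∀ z, z ∈ C ∨ (z ∈ S ∧ ∃ c ∈ C, G.Adj z c) := by
      have hclo : Clo G ∅ {z | z ∈ C ∨ (z ∈ S ∧ ∃ c ∈ C, G.Adj z c)} := by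
        rintro a (ha | ⟨haS, hac⟩) b _ hab
        · by_cases hb : b ∈ S
          · exact Or.inr ⟨hb, a, ha, hab.symm⟩
          · exact Or.inl (hC.2.2.1 _ ha _ hb hab)
        · by_cases hbC : b ∈ C
          · exact Or.inl hbC
          · have hbS := hxn a haS hac b hab hbC
            refine Or.inr ⟨hbS, ?_⟩
            by_contra hn
            exact hB ⟨a, haS, hac, b, hbS, hab, fun c hc h => hn ⟨c, hc, h⟩⟩
      obtain ⟨c, hc⟩ := hC.2.1
      intro z
      obtain ⟨p⟩ := hconn.preconnected c z
      have : ∀ {a b : V} (p : G.Walk a b),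
          a ∈ {z | z ∈ C ∨ (z ∈ S ∧ ∃ c ∈ C, G.Adj z c)} →
          b ∈ {z | z ∈ C ∨ (z ∈ S ∧ ∃ c ∈ C, G.Adj z c)} := by
        intro a b p
        induction p with
        | nil => exact id
        | cons h p ih => exact fun ha => ih (hclo _ ha _ (by simp) h)
      exact this p (Or.inl hc)
    apply hdisc
    have hmem : ∀ a : (Sᶜ : Set V), a ∈ C0.supp := by
      intro a
      rcases hall a.1 with h | h
      · rw [hCdef] at h
        obtain ⟨b, hb, hba⟩ := h
        rwa [Subtype.ext hba] at hb
      · exact absurd h.1 a.2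
    obtain ⟨a0, -⟩ := C0.nonempty_supp
    have : Nonempty (Sᶜ : Set V) := ⟨a0⟩
    refine ⟨fun a b => ?_⟩
    have ha := hmem a
    have hb := hmem b
    rw [ConnectedComponent.mem_supp_iff] at ha hb
    exact ConnectedComponent.eq.1 (ha.trans hb.symm)
end

section
/- If T is a tree (a connected acyclic finite simple graph) with at least one vertex, then the positive semidefinite zero forcing number of T equals 1; that is, any single vertex of T forms a positive semidefinite zero forcing set. -/
open SimpleGraph

/-- In an acyclic graph any edge from a blue to a white vertex is a legal force. -/
theorem psdStep_of_adj {V : Type*} {G : SimpleGraph V} (hG : G.IsAcyclic) {S : Set V} {u v : V}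
    (hu : u ∈ S) (hv : v ∉ S) (h : G.Adj u v) : PSDStep G S u v := by
  classical
  refine ⟨hu, h, hv, ?_⟩
  intro w hw huw hr
  by_contra hne
  obtain ⟨p, hp⟩ := hr.exists_isPath
  let f : G.induce (Sᶜ : Set V) ↪g G := SimpleGraph.Embedding.induce (Sᶜ : Set V)
  have hq : (p.map f.toHom).IsPath := SimpleGraph.Walk.map_isPath_of_injective f.injective hp
  let r : G.Walk v w := SimpleGraph.Walk.cons h.symm (SimpleGraph.Walk.cons huw SimpleGraph.Walk.nil)
  have hr' : r.IsPath := by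
    have h1 := h.ne
    have h2 := huw.ne
    simp only [r, SimpleGraph.Walk.isPath_def, SimpleGraph.Walk.support_cons,
      SimpleGraph.Walk.support_nil, List.nodup_cons, List.mem_cons]
    simp
    grind
  have heq : p.map f.toHom = r := by
    have := hG.path_unique ⟨_, hq⟩ ⟨r, hr'⟩
    exact congrArg Subtype.val this
  have hmem : u ∈ (p.map f.toHom).support := by
    have : u ∈ r.support := by simp [r]
    exact heq ▸ this
  rw [SimpleGraph.Walk.support_map, List.mem_map] at hmem
  obtain ⟨x, _, hx⟩ := hmem
  apply x.2
  have : (x : V) = u := hx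
  rw [this]
  exact hu

/-- A nonempty proper blue set in a connected graph has a boundary edge. -/
theorem exists_boundary {V : Type*} {G : SimpleGraph V} (hc : G.Connected) {S : Set V}
    (hS : S.Nonempty) (hne : S ≠ Set.univ) : ∃ u ∈ S, ∃ v, v ∉ S ∧ G.Adj u v := by
  obtain ⟨a, ha⟩ := hS
  obtain ⟨b, hb⟩ := (Set.ne_univ_iff_exists_notMem S).1 hne
  obtain ⟨p⟩ := hc.preconnected a b
  obtain ⟨d, _, h1, h2⟩ := p.exists_boundary_dart S ha hb
  exact ⟨d.fst, h1, d.snd, h2, d.adj⟩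

theorem derives_univ {V : Type*} [Finite V] {G : SimpleGraph V} (hc : G.Connected)
    (hG : G.IsAcyclic) (B : Set V) (n : ℕ) : ∀ S : Set V, S.Nonempty → (Sᶜ).ncard = n →
    Derives (PSDStep G) B S → Derives (PSDStep G) B Set.univ := by
  induction n with
  | zero =>
    intro S _ h0 hd
    rw [Set.ncard_eq_zero, Set.compl_empty_iff] at h0
    exact h0 ▸ hd
  | succ n ih =>
    intro S hS hn hd
    have hne : S ≠ Set.univ := by
      rintro rfl
      simp at hn
    obtain ⟨u, hu, v, hv, huv⟩ := exists_boundary hc hS hne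
    refine ih (insert v S) (Set.insert_nonempty _ _) ?_
      (Derives.tail hd (psdStep_of_adj hG hu hv huv))
    have h1 : (insert v S)ᶜ = Sᶜ \ {v} := by
      ext x
      simp [not_or, and_comm]
    rw [h1, Set.ncard_diff_singleton_of_mem (by exact hv), hn]
    rfl

theorem derives_empty {V : Type*} {G : SimpleGraph V} {B S : Set V}
    (h : Derives (PSDStep G) B S) (hB : B = ∅) : S = ∅ := by
  induction h with
  | refl => exact hB
  | tail _ hs ih =>
    have h1 := hs.1
    rw [ih] at h1
    exact h1.elim

/-- For a tree `T` with at least one vertex, `Z₊(T) = 1`; indeed any single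
vertex is a positive semidefinite zero forcing set. -/
theorem tree_Zplus_eq_one {V : Type*} [Fintype V] [Nonempty V] (T : SimpleGraph V)
    (hconn : T.Connected) (hacyc : T.IsAcyclic) :
    Zplus T = 1 ∧ ∀ v : V, IsPSDForcingSet T {v} := by
  have hall : ∀ v : V, IsPSDForcingSet T {v} := fun v =>
    derives_univ hconn hacyc {v} _ {v} (Set.singleton_nonempty v) rfl (Derives.refl _)
  refine ⟨?_, hall⟩
  obtain ⟨v⟩ := ‹Nonempty V›
  have hmem : 1 ∈ {n : ℕ | ∃ B : Set V, IsPSDForcingSet T B ∧ B.ncard = n} :=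
    ⟨{v}, hall v, Set.ncard_singleton v⟩
  apply le_antisymm (Nat.sInf_le hmem)
  obtain ⟨B, hB, hn⟩ := Nat.sInf_mem ⟨1, hmem⟩
  change 1 ≤ sInf _
  rw [← hn, Nat.one_le_iff_ne_zero]
  intro h0
  rw [Set.ncard_eq_zero] at h0
  have h1 : (Set.univ : Set V) = ∅ := derives_empty hB h0
  have h2 : v ∈ (Set.univ : Set V) := Set.mem_univ v
  rw [h1] at h2
  exact h2
end

section
/- The gap between the standard and positive semidefinite zero forcing numbers can be arbitrarily large: for every natural number C there exists a finite simple graph G such that Z(G) − Z_+(G) > C. -/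
open SimpleGraph

/-- The star with `n` leaves; `none` is the center. -/
def starG (n : ℕ) : SimpleGraph (Option (Fin n)) where
  Adj x y := (x = none ∧ y ≠ none) ∨ (x ≠ none ∧ y = none)
  symm := ⟨by intro x y h; tauto⟩
  loopless := ⟨by intro x h; tauto⟩

theorem starG_inv {n : ℕ} {a b : Fin n} (hab : a ≠ b) {B T : Set (Option (Fin n))}
    (h : Derives (StdStep (starG n)) B T) (ha : some a ∉ B) (hb : some b ∉ B) :
    some a ∉ T ∧ some b ∉ T := by
  induction h with
  | refl => exact ⟨ha, hb⟩
  | @tail T u v h hs ih =>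
    obtain ⟨h1, h2⟩ := ih
    obtain ⟨hu, hv, hadj, huniq⟩ := hs
    rcases hadj with ⟨rfl, hv'⟩ | ⟨hu', rfl⟩
    · have e1 := huniq (some a) (Or.inl ⟨rfl, by simp⟩) h1
      have e2 := huniq (some b) (Or.inl ⟨rfl, by simp⟩) h2
      exact absurd (Option.some.inj (e1.trans e2.symm)) hab
    · simp [h1, h2]

theorem starG_lower {n : ℕ} {B : Set (Option (Fin n))} (h : IsStdForcingSet (starG n) B) :
    n - 1 ≤ B.ncard := by
  have key : ∀ a b : Fin n, some a ∉ B → some b ∉ B → a = b := by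
    intro a b ha hb
    by_contra hab
    exact (starG_inv hab h ha hb).1 (Set.mem_univ _)
  have hc : Bᶜ.ncard ≤ 2 := by
    have : ∃ x, Bᶜ ⊆ {none, x} := by
      by_cases hex : ∃ a : Fin n, some a ∉ B
      · obtain ⟨a, ha⟩ := hex
        refine ⟨some a, ?_⟩
        rintro (_ | b) hb
        · simp
        · simp [key b a hb ha]
      · push Not at hex
        refine ⟨none, ?_⟩
        rintro (_ | b) hb
        · simp
        · exact absurd (hex b) hb
    obtain ⟨x, hx⟩ := this
    exact (Set.ncard_le_ncard hx (Set.toFinite _)).trans (by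
      have := Set.ncard_insert_le (none : Option (Fin n)) {x}
      simpa using this)
  have := Set.ncard_add_ncard_compl B
  simp at this
  omega

theorem starG_psd (n : ℕ) : IsPSDForcingSet (starG n) {none} := by
  have key : ∀ s : Finset (Fin n),
      Derives (PSDStep (starG n)) {none} (insert none (some '' (s : Set (Fin n)))) := by
    intro s
    induction s using Finset.induction_on with
    | empty => simpa using Derives.refl _
    | @insert a s ha ih =>
      have : (insert none (some '' ((insert a s : Finset (Fin n)) : Set (Fin n)))) =
          insert (some a) (insert none (some '' (s : Set (Fin n)))) := by
        rw [Finset.coe_insert, Set.image_insert_eq, Set.insert_comm]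
      rw [this]
      refine Derives.tail (u := none) ih ⟨by simp, Or.inl ⟨rfl, by simp⟩, by simpa using ha, ?_⟩
      rintro w hw - ⟨p⟩
      cases p with
      | nil => rfl
      | @cons _ v _ hadj _ =>
        rcases hadj with ⟨h, -⟩ | ⟨-, h⟩
        · simp at h
        · exact absurd (Or.inl h) v.2
  have h := key Finset.univ
  have e : (insert none (some '' ((Finset.univ : Finset (Fin n)) : Set (Fin n)))) = Set.univ := by
    ext (_ | x) <;> simp
  rw [e] at h
  exact h

/-- The gap between the standard and positive semidefinite zero forcing numbers
can be arbitrarily large. -/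
theorem gap_arbitrarily_large :
    ∀ C : ℕ, ∃ (V : Type) (_ : Fintype V) (G : SimpleGraph V),
      Z G - Zplus G > C := by
  intro C
  refine ⟨Option (Fin (C + 4)), inferInstance, starG (C + 4), ?_⟩
  have h1 : Zplus (starG (C + 4)) ≤ 1 := Nat.sInf_le ⟨{none}, starG_psd _, by simp⟩
  have h2 : C + 4 - 1 ≤ Z (starG (C + 4)) := by
    obtain ⟨B, hB, hn⟩ := Nat.sInf_mem
      (s := {n : ℕ | ∃ B : Set _, IsStdForcingSet (starG (C + 4)) B ∧ B.ncard = n})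
      ⟨_, Set.univ, Derives.refl _, rfl⟩
    unfold Z
    rw [← hn]
    exact starG_lower hB
  omega
end
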